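/- There exist constants C > 0 and T₀ > 0 such that for all T ≥ T₀, all H ∈ (0, T^{1/4}], and all t ∈ [T, T + H], setting P₀ = √(T/(2π)), one has |Z'(t) + 2 · Σ_{n < P₀} n^{-1/2} · ln(P₀/n) · sin(ϑ(t) - t·ln n)| ≤ C · T^{-1/4} · ln T, where the sum runs over positive integers n with n < P₀ and Z' is the derivative of the Hardy function Z. -/

import Mathlib

open Filter

/-- The Riemann–Siegel theta function
`ϑ(t) = -(t/2)·ln π + Im(log Γ(1/4 + i t/2))`. -/
noncomputable def riemannSiegelTheta (t : ℝ) : ℝ :=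
  -(t / 2) * Real.log Real.pi +
    (Complex.log (Complex.Gamma (1 / 4 + Complex.I * ((t : ℂ) / 2)))).im

/-- The Hardy function `Z(t) = e^{iϑ(t)} ζ(1/2 + it)`, which is real-valued
for real `t` (formalized by taking the real part). -/
noncomputable def hardyZ (t : ℝ) : ℝ :=
  (Complex.exp (Complex.I * (riemannSiegelTheta t : ℂ)) *
    riemannZeta (1 / 2 + Complex.I * (t : ℂ))).re

namespace RS
open Complex MeasureTheory Set Filter Topology

theorem integrable_of_bound (g : ℝ → ℂ) (hc : Continuous g) (C V : ℝ)
    (hb : ∀ v, V ≤ |v| → ‖g v‖ ≤ C * Real.exp (-v ^ 2)) : Integrable g := by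
  refine hc.locallyIntegrable.integrable_of_isBigO_cocompact (g := fun v => Real.exp (-1 * v ^ 2)) ?_
    ((integrable_exp_neg_mul_sq one_pos).integrableAtFilter _)
  refine Asymptotics.IsBigO.of_bound C ?_
  have : ∀ᶠ v : ℝ in cocompact ℝ, V ≤ |v| :=
    (tendsto_norm_cocompact_atTop (E := ℝ)).eventually_ge_atTop V
  filter_upwards [this] with v hv
  simpa [abs_of_pos (Real.exp_pos _)] using hb v hv

theorem strip_shift (h : ℂ → ℂ) (y1 y2 : ℝ) (hy : y1 ≤ y2) (C V : ℝ)
    (hc : ContinuousOn h (im ⁻¹' Icc y1 y2)) (hd : DifferentiableOn ℂ h (im ⁻¹' Ioo y1 y2))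
    (hb : ∀ v y : ℝ, y ∈ Icc y1 y2 → V ≤ |v| → ‖h (v + y * I)‖ ≤ C * Real.exp (-v ^ 2)) :
    ∫ v : ℝ, h (v + y1 * I) = ∫ v : ℝ, h (v + y2 * I) := by
  have hcont : ∀ y ∈ Icc y1 y2, Continuous fun v : ℝ => h (v + y * I) := by
    intro y hyy
    refine continuousOn_univ.mp (hc.comp (by fun_prop) ?_)
    intro v _
    simpa using hyy
  have hInteg : ∀ y ∈ Icc y1 y2, Integrable fun v : ℝ => h (v + y * I) := fun y hyy =>
    integrable_of_bound _ (hcont y hyy) C V (fun v hv => hb v y hyy hv)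
  have m1 : y1 ∈ Icc y1 y2 := ⟨le_rfl, hy⟩
  have m2 : y2 ∈ Icc y1 y2 := ⟨hy, le_rfl⟩
  have rect : ∀ R : ℝ, 0 ≤ R → (∫ v in (-R)..R, h (v + y1 * I)) - (∫ v in (-R)..R, h (v + y2 * I)) =
      -(I * ∫ y in y1..y2, h (R + y * I)) + I * ∫ y in y1..y2, h (-R + y * I) := by
    intro R hR
    have := integral_boundary_rect_eq_zero_of_continuousOn_of_differentiableOn h
      ((-R : ℝ) + y1 * I) ((R : ℝ) + y2 * I) ?_ ?_
    · simp at this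
      linear_combination this
    · refine hc.mono ?_
      intro z hz
      simp [mem_reProdIm, uIcc_of_le hy] at hz
      exact hz.2
    · refine hd.mono ?_
      intro z hz
      simp [mem_reProdIm, hy] at hz
      exact hz.2
  have t0 : Tendsto (fun R : ℝ => C * Real.exp (-R ^ 2) * |y2 - y1|) atTop (𝓝 0) := by
    have : Tendsto (fun R : ℝ => Real.exp (-R ^ 2)) atTop (𝓝 0) :=
      Real.tendsto_exp_atBot.comp (tendsto_neg_atTop_atBot.comp (tendsto_pow_atTop two_ne_zero))
    simpa using (this.const_mul C).mul_const |y2 - y1|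
  have side : ∀ e : ℝ, |e| = 1 → Tendsto (fun R : ℝ => ∫ y in y1..y2, h ((e * R : ℝ) + y * I)) atTop (𝓝 0) := by
    intro e he
    refine squeeze_zero_norm' ?_ t0
    filter_upwards [eventually_ge_atTop (max V 0)] with R hR
    refine intervalIntegral.norm_integral_le_of_norm_le_const ?_
    intro y hyy
    rw [uIoc_of_le hy] at hyy
    have := hb (e * R) y ⟨hyy.1.le, hyy.2⟩ (by
      rw [abs_mul, he, one_mul]; exact (le_max_left _ _).trans (hR.trans (le_abs_self R)))
    have e2 : (e * R) ^ 2 = R ^ 2 := by rw [mul_pow, ← sq_abs e, he]; ring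
    rwa [e2] at this
  have l1 := (intervalIntegral_tendsto_integral (hInteg y1 m1) tendsto_neg_atTop_atBot tendsto_id)
  have l2 := (intervalIntegral_tendsto_integral (hInteg y2 m2) tendsto_neg_atTop_atBot tendsto_id)
  have l3 := l1.sub l2
  have s1 := side 1 (by simp)
  have s2 := side (-1) (by simp)
  have l4 : Tendsto (fun R : ℝ => -(I * ∫ y in y1..y2, h ((1 * R : ℝ) + y * I))
      + I * ∫ y in y1..y2, h ((-1 * R : ℝ) + y * I)) atTop (𝓝 0) := by
    simpa using (s1.const_mul I).neg.add (s2.const_mul I)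
  have l5 := tendsto_nhds_unique_of_eventuallyEq l3 l4 (by
    filter_upwards [eventually_ge_atTop 0] with R hR
    simpa using rect R hR)
  exact sub_eq_zero.mp l5
end RS

namespace RS
open Complex MeasureTheory Set Filter Topology

noncomputable def ln (y v : ℝ) : ℂ := (1 + I) * ((v : ℂ) + y * I)
noncomputable def D (x : ℂ) : ℂ := cexp (I * Real.pi * x) - cexp (-(I * Real.pi * x))
noncomputable def f (x : ℂ) : ℂ := cexp (I * Real.pi * x ^ 2) / D x
noncomputable def yy (n : ℕ) : ℝ := -((n : ℝ) + 1 / 2) / 2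
noncomputable def J (g : ℂ → ℂ) (n : ℕ) : ℂ := ∫ v : ℝ, (1 + I) * (g (ln (yy n) v) * f (ln (yy n) v))
def U : Set ℂ := {x | 0 < x.re - x.im}

@[simp] theorem ln_re (y v : ℝ) : (ln y v).re = v - y := by simp [ln]
@[simp] theorem ln_im (y v : ℝ) : (ln y v).im = v + y := by simp [ln]; ring

theorem continuous_ln (y : ℝ) : Continuous (ln y) := by unfold ln; fun_prop

theorem norm_exp_sq (y v : ℝ) :
    ‖cexp (I * Real.pi * (ln y v) ^ 2)‖ = Real.exp (-2 * Real.pi * (v ^ 2 - y ^ 2)) := by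
  rw [norm_exp]
  congr 1
  have : (I * Real.pi * (ln y v) ^ 2) = ((-(2 * Real.pi) : ℝ) : ℂ) * (v + y * I) ^ 2 := by
    unfold ln
    push_cast
    linear_combination (Real.pi : ℂ) * (v + y * I) ^ 2 * (2 + I) * I_sq
  rw [this, re_ofReal_mul]
  simp [sq]

theorem D_ge (x : ℂ) (h : 1 ≤ |x.im|) : 1 ≤ ‖D x‖ := by
  have n1 : ‖cexp (I * Real.pi * x)‖ = Real.exp (-(Real.pi * x.im)) := by
    rw [norm_exp]; simp
  have n2 : ‖cexp (-(I * Real.pi * x))‖ = Real.exp (Real.pi * x.im) := by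
    rw [norm_exp]; simp
  have key : |Real.exp (-(Real.pi * x.im)) - Real.exp (Real.pi * x.im)| ≤ ‖D x‖ := by
    rw [← n1, ← n2]; exact abs_norm_sub_norm_le _ _
  refine le_trans ?_ key
  have h3 := Real.pi_gt_three
  have gen : ∀ w : ℝ, 1 ≤ w → 1 ≤ Real.exp (Real.pi * w) - Real.exp (-(Real.pi * w)) := by
    intro w hw
    have a1 : Real.pi * w + 1 ≤ Real.exp (Real.pi * w) := Real.add_one_le_exp _
    have a2 : Real.exp (-(Real.pi * w)) ≤ 1 := by
      apply Real.exp_le_one_iff.mpr; nlinarith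
    nlinarith
  rcases le_abs.mp h with h | h
  · have := gen _ h
    rw [abs_sub_comm]; exact this.trans (le_abs_self _)
  · have := gen _ h
    simp only [mul_neg, neg_neg] at this
    exact this.trans (le_abs_self _)

theorem D_eq (x : ℂ) : D x = 2 * I * sin (Real.pi * x) := by
  unfold D Complex.sin
  have : (2 * I * ((cexp (-(Real.pi * x) * I) - cexp (Real.pi * x * I)) * I / 2)) =
    I ^ 2 * (cexp (-(Real.pi * x) * I) - cexp (Real.pi * x * I)) := by ring
  rw [this, I_sq]
  ring_nf

theorem D_zero_iff (x : ℂ) : D x = 0 ↔ ∃ k : ℤ, x = k := by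
  rw [D_eq]
  simp only [mul_eq_zero, OfNat.ofNat_ne_zero, I_ne_zero, or_self, false_or, Complex.sin_eq_zero_iff]
  have hp : (Real.pi : ℂ) ≠ 0 := by exact_mod_cast Real.pi_ne_zero
  refine exists_congr fun k => ?_
  rw [mul_comm]
  exact mul_left_inj' hp

theorem D_half_ge (n : ℕ) (v : ℝ) : 1 ≤ ‖D (ln (yy n) v)‖ := by
  set w : ℝ := v - ((n : ℝ) + 1 / 2) / 2 with hw
  have hx : (Real.pi : ℂ) * ln (yy n) v = ((Real.pi * w : ℝ) + (Real.pi * w : ℝ) * I) + Real.pi / 2 + n * Real.pi := by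
    unfold ln yy
    rw [hw]; push_cast
    linear_combination (-Real.pi * (n + 1 / 2 : ℂ) / 2) * I_sq
  have : ‖D (ln (yy n) v)‖ = 2 * ‖cos ((Real.pi * w : ℝ) + (Real.pi * w : ℝ) * I)‖ := by
    rw [D_eq, hx, Complex.sin_antiperiodic.add_nat_mul_eq, Complex.sin_add_pi_div_two]
    simp
  rw [this]
  set z := Real.pi * w
  have c1 : 1 - z ^ 2 / 2 ≤ Real.cos z := Real.one_sub_sq_div_two_le_cos
  have c2 : (Real.cos z) ^ 2 + (Real.sinh z) ^ 2 ≤ ‖cos ((z : ℂ) + (z : ℂ) * I)‖ ^ 2 := by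
    rw [Complex.cos_add_mul_I, ← normSq_eq_norm_sq, ← ofReal_cos, ← ofReal_cosh, ← ofReal_sin, ← ofReal_sinh, normSq_apply]
    simp only [sub_re, sub_im, mul_re, mul_im, ofReal_re, ofReal_im, I_re, I_im]
    have h1 := Real.cosh_sq z
    have h2 := Real.sin_sq_add_cos_sq z
    have h3 : Real.sin z ^ 2 = 1 - Real.cos z ^ 2 := by linarith
    have h4 : Real.cos z ^ 2 + Real.sinh z ^ 2 =
        Real.cos z ^ 2 * Real.cosh z ^ 2 + Real.sin z ^ 2 * Real.sinh z ^ 2 := by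
      rw [h1, h3]; ring
    rw [h4]
    apply le_of_eq; ring
  have c3 : Real.sin z ^ 2 ≤ Real.sinh z ^ 2 := by
    have a1 : |Real.sin z| ≤ |z| := Real.abs_sin_le_abs
    have a2 : |z| ≤ |Real.sinh z| := by
      rw [Real.abs_sinh]; exact Real.self_le_sinh_iff.mpr (abs_nonneg _)
    exact sq_le_sq.mpr (a1.trans a2)
  have c4 := Real.sin_sq_add_cos_sq z
  have c5 : (1 : ℝ) ≤ ‖cos ((z : ℂ) + (z : ℂ) * I)‖ := by
    have := norm_nonneg (cos ((z : ℂ) + (z : ℂ) * I))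
    nlinarith
  linarith

theorem f_le_of (y v : ℝ) (h : 1 ≤ ‖D (ln y v)‖) :
    ‖f (ln y v)‖ ≤ Real.exp (-2 * Real.pi * (v ^ 2 - y ^ 2)) := by
  unfold f
  rw [norm_div, norm_exp_sq]
  exact div_le_self (Real.exp_pos _).le h

theorem exp_comb (a v y Y : ℝ) (hy : |y| ≤ Y) :
    Real.exp (a * |v|) * Real.exp (-2 * Real.pi * (v ^ 2 - y ^ 2)) ≤
      Real.exp (a ^ 2 + 2 * Real.pi * Y ^ 2) * Real.exp (-v ^ 2) := by
  rw [← Real.exp_add, ← Real.exp_add]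
  apply Real.exp_le_exp.mpr
  have h3 := Real.pi_gt_three
  have h1 : a * |v| ≤ a ^ 2 + v ^ 2 := by
    have := sq_abs v
    nlinarith [sq_nonneg (a - |v|), sq_nonneg (a + |v|), sq_nonneg a]
  have h2 : y ^ 2 ≤ Y ^ 2 := by
    rw [← sq_abs y]; exact pow_le_pow_left₀ (abs_nonneg _) hy 2
  nlinarith [sq_nonneg v, mul_le_mul_of_nonneg_left h2 Real.pi_pos.le]

theorem cont_D : Continuous D := by unfold D; fun_prop
theorem diff_D : Differentiable ℂ D := by unfold D; fun_prop

theorem cont_f_ln (n : ℕ) : Continuous fun v => f (ln (yy n) v) := by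
  unfold f
  have := continuous_ln (yy n)
  refine Continuous.div (by fun_prop) (cont_D.comp this) ?_
  intro v h0
  have := D_half_ge n v
  rw [h0] at this; simp at this; linarith

theorem integrable_gf (g : ℂ → ℂ) (n : ℕ) (hg : Continuous fun v => g (ln (yy n) v)) (C a : ℝ)
    (hb : ∀ v, ‖g (ln (yy n) v)‖ ≤ C * Real.exp (a * |v|)) :
    Integrable fun v => g (ln (yy n) v) * f (ln (yy n) v) := by
  refine integrable_of_bound _ (hg.mul (cont_f_ln n)) (C * Real.exp (a ^ 2 + 2 * Real.pi * |yy n| ^ 2)) 0 ?_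
  intro v _
  have hC : 0 ≤ C := by
    have := (norm_nonneg _).trans (hb 0)
    simpa using this
  rw [norm_mul]
  calc _ ≤ C * Real.exp (a * |v|) * Real.exp (-2 * Real.pi * (v ^ 2 - (yy n) ^ 2)) :=
        mul_le_mul (hb v) (f_le_of _ _ (D_half_ge n v)) (norm_nonneg _) (by positivity)
    _ = C * (Real.exp (a * |v|) * Real.exp (-2 * Real.pi * (v ^ 2 - (yy n) ^ 2))) := by ring
    _ ≤ C * (Real.exp (a ^ 2 + 2 * Real.pi * |yy n| ^ 2) * Real.exp (-v ^ 2)) :=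
        mul_le_mul_of_nonneg_left (exp_comb a v _ _ le_rfl) hC
    _ = _ := by ring

theorem gaussian_line (u : ℂ) (y : ℝ) :
    ∫ v : ℝ, (1 + I) * cexp (I * Real.pi * (ln y v) ^ 2 + I * Real.pi * ln y v - ln y v * u) =
      cexp (I * u ^ 2 / (4 * Real.pi) + u / 2) := by
  rw [integral_const_mul]
  have hp : (Real.pi : ℂ) ≠ 0 := by exact_mod_cast Real.pi_ne_zero
  have e : ∀ v : ℝ, I * Real.pi * (ln y v) ^ 2 + I * Real.pi * ln y v - ln y v * u =
      (-(2 * Real.pi) : ℂ) * (v : ℂ) ^ 2 + (-4 * Real.pi * I * y + (I * Real.pi - u) * (1 + I)) * v +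
        (2 * Real.pi * y ^ 2 + (I * Real.pi - u) * (1 + I) * (I * y)) := by
    intro v
    unfold ln
    linear_combination ((Real.pi : ℂ) * (v + y * I) ^ 2 * (2 + I) - 2 * Real.pi * y ^ 2) * I_sq
  simp_rw [e]
  rw [integral_cexp_quadratic (by simp [Real.pi_pos])]
  have h1 : (Real.pi / -(-(2 * Real.pi)) : ℂ) ^ (1 / 2 : ℂ) * (1 + I) = cexp (I * Real.pi / 4) := by
    have : (Real.pi / -(-(2 * Real.pi)) : ℂ) = ((1 / 2 : ℝ) : ℂ) := by
      push_cast; field_simp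
    rw [this]
    have h2 : (((1 / 2 : ℝ) : ℂ)) ^ (1 / 2 : ℂ) = ((Real.sqrt 2 / 2 : ℝ) : ℂ) := by
      rw [show (1 / 2 : ℂ) = ((1 / 2 : ℝ) : ℂ) by push_cast; rfl, ← ofReal_cpow (by norm_num), ← Real.sqrt_eq_rpow]
      congr 1
      rw [Real.sqrt_eq_iff_mul_self_eq (by norm_num) (by positivity)]
      have := Real.mul_self_sqrt (show (0 : ℝ) ≤ 2 by norm_num)
      nlinarith
    rw [h2, show I * Real.pi / 4 = ((Real.pi / 4 : ℝ) : ℂ) * I by push_cast; ring, exp_mul_I,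
      ← ofReal_cos, ← ofReal_sin, Real.cos_pi_div_four, Real.sin_pi_div_four]
    ring
  rw [← mul_assoc, mul_comm (1 + I), h1, ← Complex.exp_add]
  congr 1
  field_simp
  ring_nf
  simp only [show I ^ 3 = -I by rw [pow_succ, I_sq]; ring, show I ^ 4 = 1 by rw [show (4 : ℕ) = 2 * 2 by rfl, pow_mul, I_sq]; ring, I_sq]
  ring

theorem f_add_one (x : ℂ) : f (x + 1) = f x * cexp (2 * Real.pi * I * x) := by
  unfold f
  have h1 : D (x + 1) = - D x := by
    rw [D_eq, D_eq, mul_add, mul_one, Complex.sin_add_pi]; ring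
  have h2 : cexp (I * Real.pi * (x + 1) ^ 2) = -(cexp (I * Real.pi * x ^ 2) * cexp (2 * Real.pi * I * x)) := by
    rw [← Complex.exp_add, show I * Real.pi * (x + 1) ^ 2 = (I * Real.pi * x ^ 2 + 2 * Real.pi * I * x) + Real.pi * I by ring,
      Complex.exp_add _ (Real.pi * I), exp_pi_mul_I]
    ring
  rw [h1, h2, neg_div_neg_eq]; ring

theorem f_mul (x : ℂ) (h : D x ≠ 0) : f x * (cexp (2 * Real.pi * I * x) - 1) =
    cexp (I * Real.pi * x ^ 2 + I * Real.pi * x) := by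
  unfold f
  rw [div_mul_eq_mul_div, div_eq_iff h, Complex.exp_add, mul_assoc (cexp _) (cexp _) (D x)]
  refine congrArg _ ?_
  unfold D
  rw [mul_sub, ← Complex.exp_add, ← Complex.exp_add, ← Complex.exp_zero]
  congr 2 <;> ring

theorem ln_shift (n : ℕ) (v : ℝ) : ln (yy (n + 1)) (v + 1 / 2) = ln (yy n) v + 1 := by
  unfold ln yy; push_cast; linear_combination (-1 / 2 : ℂ) * I_sq

theorem D_ne (n : ℕ) (v : ℝ) : D (ln (yy n) v) ≠ 0 := by
  intro h0
  have := D_half_ge n v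
  rw [h0] at this; simp at this; linarith

theorem norm_ln_le (y v : ℝ) : ‖ln y v‖ ≤ 2 * (|v| + |y|) := by
  unfold ln
  rw [norm_mul]
  refine mul_le_mul ?_ ?_ (norm_nonneg _) (by norm_num)
  · exact (norm_add_le _ _).trans (by simp; norm_num)
  · exact (norm_add_le _ _).trans (by simp)

theorem exp_lin_bound (u : ℂ) (y v : ℝ) : ‖cexp (-(ln y v * u))‖ ≤
    Real.exp (2 * |y| * ‖u‖) * Real.exp (2 * ‖u‖ * |v|) := by
  rw [← Real.exp_add]
  refine (norm_exp_le_exp_norm _).trans (Real.exp_le_exp.mpr ?_)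
  rw [norm_neg, norm_mul]
  have := mul_le_mul_of_nonneg_right (norm_ln_le y v) (norm_nonneg u)
  linarith

theorem integrable_exp_f (u : ℂ) (n : ℕ) :
    Integrable fun v => cexp (-(ln (yy n) v * u)) * f (ln (yy n) v) :=
  integrable_gf (fun x => cexp (-(x * u))) n (by have := continuous_ln (yy n); fun_prop) _ _
    (fun v => exp_lin_bound u _ v)

theorem J_exp_succ (u : ℂ) (n : ℕ) : J (fun x => cexp (-(x * u))) (n + 1) =
    cexp (-u) * (J (fun x => cexp (-(x * u))) n + cexp (I * u ^ 2 / (4 * Real.pi) + u / 2)) := by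
  have h1 : J (fun x => cexp (-(x * u))) (n + 1) = ∫ v : ℝ,
      (1 + I) * (cexp (-((ln (yy n) v + 1) * u)) * f (ln (yy n) v + 1)) := by
    unfold J
    rw [← integral_add_right_eq_self _ (1 / 2 : ℝ)]
    simp_rw [ln_shift]
  have h2 : ∀ v : ℝ, (1 + I) * (cexp (-((ln (yy n) v + 1) * u)) * f (ln (yy n) v + 1)) =
    cexp (-u) * ((1 + I) * (cexp (-(ln (yy n) v * u)) * f (ln (yy n) v)) +
      (1 + I) * cexp (I * Real.pi * (ln (yy n) v) ^ 2 + I * Real.pi * ln (yy n) v - ln (yy n) v * u)) := by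
    intro v
    have := f_mul _ (D_ne n v)
    rw [f_add_one, sub_eq_add_neg (_ + _) (_ * u), Complex.exp_add _ (-(_ * u)), ← this,
      show -((ln (yy n) v + 1) * u) = -(ln (yy n) v * u) + -u by ring, Complex.exp_add]
    ring
  rw [h1]
  simp_rw [h2]
  rw [integral_const_mul, integral_add, gaussian_line]
  · rfl
  · exact (integrable_exp_f u n).const_mul _
  · have := (((integrable_exp_f u (n + 1)).comp_add_right (1 / 2 : ℝ)).const_mul ((1 + I) * cexp u)).sub
      ((integrable_exp_f u n).const_mul (1 + I))
    refine this.congr (ae_of_all _ fun v => ?_)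
    simp only [Pi.sub_apply, ln_shift]
    have h := h2 v
    have e1 : cexp u * cexp (-u) = 1 := by rw [← Complex.exp_add]; simp
    linear_combination cexp u * h + ((1 + I) * (cexp (-(ln (yy n) v * u)) * f (ln (yy n) v)) +
      (1 + I) * cexp (I * Real.pi * (ln (yy n) v) ^ 2 + I * Real.pi * ln (yy n) v - ln (yy n) v * u)) * e1
end RS

namespace RS
open Complex MeasureTheory Set Filter Topology

theorem isOpen_U : IsOpen U := isOpen_lt continuous_const (by fun_prop)

theorem deriv_D_ne (m : ℕ) : deriv D m ≠ 0 := by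
  have : HasDerivAt D (cexp (I * Real.pi * m) * (I * Real.pi) - cexp (-(I * Real.pi * m)) * (-(I * Real.pi))) m := by
    unfold D
    have h : HasDerivAt (fun x : ℂ => I * Real.pi * x) (I * Real.pi) m := by
      simpa using (hasDerivAt_id (m : ℂ)).const_mul (I * Real.pi)
    exact h.cexp.sub h.neg.cexp
  rw [this.deriv]
  have e : cexp (-(I * Real.pi * m)) = cexp (I * Real.pi * m) := by
    have : D m = 0 := (D_zero_iff _).mpr ⟨m, by simp⟩
    unfold D at this
    exact (sub_eq_zero.mp this).symm
  rw [e]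
  have : cexp (I * Real.pi * m) * (I * Real.pi) - cexp (I * Real.pi * m) * (-(I * Real.pi)) =
    2 * (cexp (I * Real.pi * m) * (I * Real.pi)) := by ring
  rw [this]
  simp [Complex.exp_ne_zero, Real.pi_ne_zero]

theorem D_ne_strip (m : ℕ) (x : ℂ) (hx : x ≠ m) (h1 : (m : ℝ) - 1 / 2 ≤ x.re - x.im) (h2 : x.re - x.im ≤ m + 1 / 2) :
    D x ≠ 0 := by
  intro h
  obtain ⟨k, rfl⟩ := (D_zero_iff x).mp h
  simp at h1 h2
  have a : (m : ℤ) < k + 1 := by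
    have : ((m : ℤ) : ℝ) < ((k + 1 : ℤ) : ℝ) := by push_cast; linarith
    exact_mod_cast this
  have b : k < (m : ℤ) + 1 := by
    have : (k : ℝ) < ((m + 1 : ℤ) : ℝ) := by push_cast; linarith
    exact_mod_cast this
  have : k = m := by omega
  subst this
  simp at hx

theorem J_succ (g : ℂ → ℂ) (n : ℕ) (hg : DifferentiableOn ℂ g U) (C a : ℝ)
    (hgb : ∀ y ∈ Icc (yy (n + 1)) (yy n), ∀ v, ‖g (ln y v)‖ ≤ C * Real.exp (a * |v|)) :
    J g (n + 1) = J g n + g ((n + 1 : ℕ) : ℂ) := by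
  set m : ℕ := n + 1 with hm
  have hyy : yy m ≤ yy n := by unfold yy; rw [hm]; push_cast; linarith
  have m1 : yy m ∈ Icc (yy m) (yy n) := ⟨le_rfl, hyy⟩
  have m2 : yy n ∈ Icc (yy m) (yy n) := ⟨hyy, le_rfl⟩
  set φ : ℂ → ℂ := fun x => dslope g m x * (cexp (I * Real.pi * x ^ 2) / dslope D m x) with hφ
  have strip1 : ∀ y ∈ Icc (yy m) (yy n), (m : ℝ) - 1 / 2 ≤ -2 * y ∧ -2 * y ≤ m + 1 / 2 := by
    intro y hy
    obtain ⟨q1, q2⟩ := hy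
    unfold yy at q1 q2
    rw [hm] at *
    push_cast at *
    constructor <;> linarith
  have hDm : D m = 0 := (D_zero_iff _).mpr ⟨m, by simp⟩
  have hφd : ∀ x : ℂ, (m : ℝ) - 1 / 2 ≤ x.re - x.im → x.re - x.im ≤ m + 1 / 2 → DifferentiableAt ℂ φ x := by
    intro x h1 h2
    have hmU : (m : ℂ) ∈ U := by simp [U, hm]; positivity
    have hxU : x ∈ U := by
      have : (1 : ℝ) ≤ m := by rw [hm]; push_cast; linarith [(Nat.cast_nonneg n : (0 : ℝ) ≤ n)]
      show 0 < x.re - x.im; linarith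
    have d1 : DifferentiableAt ℂ (dslope g m) x :=
      ((differentiableOn_dslope (isOpen_U.mem_nhds hmU)).mpr hg).differentiableAt (isOpen_U.mem_nhds hxU)
    have d2 : DifferentiableAt ℂ (dslope D m) x :=
      ((differentiableOn_dslope (s := univ) univ_mem).mpr diff_D.differentiableOn).differentiableAt univ_mem
    refine d1.mul (DifferentiableAt.div (by fun_prop) d2 ?_)
    by_cases hx : x = m
    · rw [hx, dslope_same]; exact deriv_D_ne m
    · rw [dslope_of_ne _ hx, slope_def_field, hDm, sub_zero]
      exact div_ne_zero (D_ne_strip m x hx h1 h2) (sub_ne_zero.mpr hx)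
  have hφe : ∀ x : ℂ, x ≠ m → φ x = (g x - g m) * f x := by
    intro x hx
    simp only [hφ]
    rw [dslope_of_ne _ hx, dslope_of_ne _ hx, slope_def_field, slope_def_field, hDm, sub_zero]
    unfold f
    have := sub_ne_zero.mpr hx
    by_cases h0 : D x = 0
    · simp [h0]
    · field_simp
  have hC : 0 ≤ C := by
    have := (norm_nonneg _).trans (hgb _ m1 0)
    simpa using this
  set Y := |yy m| + |yy n| with hY
  have hyY : ∀ y ∈ Icc (yy m) (yy n), |y| ≤ Y := by
    intro y hy
    have : yy n ≤ 0 := by unfold yy; have := (Nat.cast_nonneg n : (0 : ℝ) ≤ n); linarith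
    rw [abs_of_nonpos (hy.2.trans this), hY, abs_of_nonpos (hyy.trans this)]
    have := abs_nonneg (yy n)
    linarith [hy.1]
  have hln : ∀ v y : ℝ, (1 + I) * ((v : ℂ) + y * I) = ln y v := fun v y => rfl
  have key := strip_shift (fun z => φ ((1 + I) * z)) (yy m) (yy n) hyy
    ((C * Real.exp (a ^ 2 + 2 * Real.pi * Y ^ 2) + ‖g m‖ * Real.exp (0 ^ 2 + 2 * Real.pi * Y ^ 2))) (Y + 1) ?_ ?_ ?_
  · simp only [hln] at key
    have ne : ∀ k : ℕ, ∀ v : ℝ, ln (yy k) v ≠ m := by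
      intro k v h
      apply D_ne k v
      rw [h]; exact hDm
    simp only [hφe _ (ne _ _)] at key
    have i1 : ∀ k : ℕ, yy k ∈ Icc (yy m) (yy n) → Integrable fun v => g (ln (yy k) v) * f (ln (yy k) v) := by
      intro k hk
      refine integrable_gf g k ?_ C a (hgb _ hk)
      refine continuousOn_univ.mp (hg.continuousOn.comp (continuous_ln _).continuousOn ?_)
      intro v _
      have := (Nat.cast_nonneg k : (0 : ℝ) ≤ k)
      simp [U, yy]; linarith
    have i2 : ∀ k : ℕ, Integrable fun v => f (ln (yy k) v) := by
      intro k
      simpa using integrable_exp_f 0 k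
    have e1 : ∀ k : ℕ, yy k ∈ Icc (yy m) (yy n) → J g k = g m * J (fun x => cexp (-(x * 0))) k +
        (1 + I) * ∫ v : ℝ, (g (ln (yy k) v) - g m) * f (ln (yy k) v) := by
      intro k hk
      unfold J
      simp only [sub_mul, mul_zero, neg_zero, Complex.exp_zero, one_mul]
      rw [integral_sub (i1 k hk) ((i2 k).const_mul _)]
      simp only [integral_const_mul]
      ring
    have e2 := J_exp_succ 0 n
    simp only [neg_zero, Complex.exp_zero, one_mul, zero_pow two_ne_zero, mul_zero, zero_div, add_zero] at e2
    have e3 := e1 m m1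
    have e4 := e1 n m2
    simp only [mul_zero, neg_zero, Complex.exp_zero] at e3 e4
    rw [e3, e4, key, e2]
    ring
  · intro z hz
    refine (DifferentiableAt.comp z (hφd _ ?_ ?_) (by fun_prop)).continuousAt.continuousWithinAt
    all_goals
      have := strip1 _ hz
      simp
      linarith [this.1, this.2]
  · intro z hz
    refine (DifferentiableAt.comp z (hφd _ ?_ ?_) (by fun_prop)).differentiableWithinAt
    all_goals
      have := strip1 _ (Ioo_subset_Icc_self hz)
      simp
      linarith [this.1, this.2]
  · intro v y hy hv
    simp only [hln]
    have him : 1 ≤ |(ln y v).im| := by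
      rw [ln_im]
      have := hyY y hy
      have t : |v| ≤ |v + y| + |y| := by
        have := abs_sub (v + y) y
        simpa using this
      linarith
    have hne : ln y v ≠ m := by
      intro h; rw [h] at him; simp at him; linarith
    rw [hφe _ hne, norm_mul]
    have hf := f_le_of y v (D_ge _ him)
    have x1 := exp_comb a v y Y (hyY y hy)
    have x2 := exp_comb 0 v y Y (hyY y hy)
    rw [zero_mul, Real.exp_zero, one_mul] at x2
    set E := Real.exp (-2 * Real.pi * (v ^ 2 - y ^ 2))
    calc _ ≤ (C * Real.exp (a * |v|) + ‖g m‖) * E := by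
          refine mul_le_mul ?_ hf (norm_nonneg _) (by positivity)
          exact (norm_sub_le _ _).trans (by linarith [hgb y hy v])
      _ = C * (Real.exp (a * |v|) * E) + ‖g m‖ * E := by ring
      _ ≤ C * (Real.exp (a ^ 2 + 2 * Real.pi * Y ^ 2) * Real.exp (-v ^ 2)) +
          ‖g m‖ * (Real.exp (0 ^ 2 + 2 * Real.pi * Y ^ 2) * Real.exp (-v ^ 2)) := by gcongr
      _ = _ := by ring
end RS

namespace RS
open Complex MeasureTheory Set Filter Topology

theorem yy_le (n : ℕ) : yy n ≤ -1 / 4 := by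
  have := (Nat.cast_nonneg n : (0 : ℝ) ≤ n)
  unfold yy; linarith

theorem ln_mem_U (y v : ℝ) (hy : y ≤ -1 / 4) : ln y v ∈ U := by
  show 0 < (ln y v).re - (ln y v).im
  rw [ln_re, ln_im]; linarith

theorem U_slit {x : ℂ} (hx : x ∈ U) : x ∈ slitPlane := by
  have hx : 0 < x.re - x.im := hx
  rw [mem_slitPlane_iff]
  by_cases h : x.im = 0
  · left; linarith
  · right; exact h

theorem mordell (u : ℂ) : (cexp u - 1) * J (fun x => cexp (-(x * u))) 0 =
    cexp (I * u ^ 2 / (4 * Real.pi) + u / 2) - 1 := by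
  have h1 := J_exp_succ u 0
  have h2 := J_succ (fun x => cexp (-(x * u))) 0 (by fun_prop) (Real.exp (2 * 1 * ‖u‖)) (2 * ‖u‖) (by
    intro y hy v
    refine (exp_lin_bound u y v).trans ?_
    gcongr
    obtain ⟨h1, h2⟩ := hy
    unfold yy at h1 h2
    norm_num at h1 h2
    rw [abs_le]; constructor <;> linarith)
  rw [h1] at h2
  have e1 : cexp u * cexp (-u) = 1 := by rw [← Complex.exp_add]; simp
  simp only [zero_add, Nat.cast_one, one_mul] at h2
  linear_combination (-cexp u) * h2 + (J (fun x => cexp (-(x * u))) 0 + cexp (I * u ^ 2 / (4 * Real.pi) + u / 2) - 1) * e1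

theorem norm_ln_ge (y v : ℝ) : |y| ≤ ‖ln y v‖ := by
  have h1 := abs_re_le_norm (ln y v)
  have h2 := abs_im_le_norm (ln y v)
  rw [ln_re] at h1
  rw [ln_im] at h2
  have : |(v + y) - (v - y)| ≤ |v + y| + |v - y| := abs_sub _ _
  rw [show (v + y) - (v - y) = 2 * y by ring, abs_mul, abs_two] at this
  linarith

theorem norm_log_le' (x : ℂ) (hx : x ≠ 0) : ‖log x‖ ≤ ‖x‖ + ‖x‖⁻¹ + 4 := by
  have h0 : 0 < ‖x‖ := norm_pos_iff.mpr hx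
  have h1 : ‖log x‖ ≤ |(log x).re| + |(log x).im| := norm_le_abs_re_add_abs_im _
  rw [log_re, log_im] at h1
  have h2 := abs_arg_le_pi x
  have h3 := Real.pi_lt_four
  have h4 : |Real.log ‖x‖| ≤ ‖x‖ + ‖x‖⁻¹ := by
    have a := Real.log_le_sub_one_of_pos h0
    have b := Real.log_le_sub_one_of_pos (inv_pos.mpr h0)
    rw [Real.log_inv] at b
    have := inv_pos.mpr h0
    rw [abs_le]; constructor <;> linarith
  linarith

theorem norm_log_ln (y v : ℝ) (hy : y ≤ -1 / 4) : ‖log (ln y v)‖ ≤ 2 * |v| + (2 * |y| + 8) := by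
  have h1 := norm_log_le' (ln y v) (slitPlane_ne_zero (U_slit (ln_mem_U y v hy)))
  have h2 := norm_ln_le y v
  have h3 : ‖ln y v‖⁻¹ ≤ 4 := by
    have := norm_ln_ge y v
    rw [abs_of_nonpos (by linarith)] at this
    rw [inv_le_comm₀ (by linarith) (by norm_num)]
    linarith
  linarith

theorem norm_cpow_le (x s : ℂ) (hx : x ≠ 0) : ‖x ^ s‖ ≤ Real.exp (‖s‖ * ‖log x‖) := by
  rw [cpow_def_of_ne_zero hx]
  refine (norm_exp_le_exp_norm _).trans ?_
  rw [norm_mul, mul_comm]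

theorem norm_pow_ln (s : ℂ) (y v R : ℝ) (hy : y ≤ -1 / 4) (hs : ‖s‖ ≤ R) :
    ‖(ln y v) ^ (-s)‖ ≤ Real.exp (R * (2 * |y| + 8)) * Real.exp (2 * R * |v|) := by
  refine (norm_cpow_le _ _ (slitPlane_ne_zero (U_slit (ln_mem_U y v hy)))).trans ?_
  rw [← Real.exp_add]
  apply Real.exp_le_exp.mpr
  rw [norm_neg]
  have := mul_le_mul hs (norm_log_ln y v hy) (norm_nonneg _) ((norm_nonneg _).trans hs)
  linarith

noncomputable def Jp (n : ℕ) (s : ℂ) : ℂ := J (fun x => x ^ (-s)) n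
noncomputable def Jl (n : ℕ) (s : ℂ) : ℂ := J (fun x => -log x * x ^ (-s)) n

theorem Jp_succ (n : ℕ) (s : ℂ) : Jp (n + 1) s = Jp n s + ((n + 1 : ℕ) : ℂ) ^ (-s) := by
  refine J_succ (fun x => x ^ (-s)) n ?_ (Real.exp (‖s‖ * (2 * |yy (n + 1)| + 8))) (2 * ‖s‖) ?_
  · intro x hx
    exact (DifferentiableAt.cpow (by fun_prop) (by fun_prop) (U_slit hx)).differentiableWithinAt
  · intro y hy v
    have hy4 := hy.2.trans (yy_le n)
    refine (norm_pow_ln s y v ‖s‖ hy4 le_rfl).trans ?_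
    have : |y| ≤ |yy (n + 1)| := by
      rw [abs_of_nonpos (by linarith), abs_of_nonpos (by linarith [yy_le (n + 1)])]
      linarith [hy.1]
    gcongr

theorem Jp_eq (n : ℕ) (s : ℂ) : Jp n s = Jp 0 s + ∑ k ∈ Finset.Ico 1 (n + 1), (k : ℂ) ^ (-s) := by
  induction n with
  | zero => simp
  | succ n ih => rw [Jp_succ, ih, Finset.sum_Ico_succ_top (b := n + 1) (by omega)]; ring

theorem cont_log_ln (n : ℕ) : Continuous fun v => log (ln (yy n) v) :=
  (continuous_ln _).clog fun v => U_slit (ln_mem_U _ v (yy_le n))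

theorem cont_pow_ln (n : ℕ) (s : ℂ) : Continuous fun v => (ln (yy n) v) ^ (-s) := by
  refine (continuous_ln _).cpow continuous_const fun v => U_slit (ln_mem_U _ v (yy_le n))

theorem integrable_pow (n : ℕ) (s : ℂ) : Integrable fun v => (ln (yy n) v) ^ (-s) * f (ln (yy n) v) :=
  integrable_gf (fun x => x ^ (-s)) n (cont_pow_ln n s) _ _ fun v => norm_pow_ln s _ v ‖s‖ (yy_le n) le_rfl

theorem hasDerivAt_Jp (n : ℕ) (s : ℂ) : HasDerivAt (Jp n) (Jl n s) s := by
  unfold Jl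
  have := hasDerivAt_integral_of_dominated_loc_of_deriv_le (μ := volume) (𝕜 := ℂ)
    (F := fun s v => (1 + I) * ((ln (yy n) v) ^ (-s) * f (ln (yy n) v)))
    (F' := fun s v => (1 + I) * ((-log (ln (yy n) v) * (ln (yy n) v) ^ (-s)) * f (ln (yy n) v))) (x₀ := s)
    (s := Metric.ball s 1)
    (bound := fun v => ‖(1 + I)‖ * ‖((Real.exp ((‖s‖ + 2) * (2 * |yy n| + 8)) * Real.exp (2 * (‖s‖ + 2) * |v|) : ℝ) : ℂ) * f (ln (yy n) v)‖)
    (Metric.ball_mem_nhds s one_pos) ?_ ?_ ?_ ?_ ?_ ?_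
  · exact this.2
  · refine Eventually.of_forall fun s => ?_
    exact (((cont_pow_ln n s).mul (cont_f_ln n)).const_mul _).aestronglyMeasurable
  · exact (integrable_pow n s).const_mul _
  · exact ((((cont_log_ln n).neg.mul (cont_pow_ln n s)).mul (cont_f_ln n)).const_mul _).aestronglyMeasurable
  · refine ae_of_all _ fun v s' hs' => ?_
    rw [norm_mul, norm_mul, norm_mul, norm_mul, norm_neg]
    refine mul_le_mul_of_nonneg_left (mul_le_mul_of_nonneg_right ?_ (norm_nonneg _)) (norm_nonneg _)
    have hs : ‖s'‖ ≤ ‖s‖ + 1 := by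
      have := norm_sub_norm_le s' s
      rw [mem_ball_iff_norm] at hs'
      linarith
    have h1 := norm_pow_ln s' (yy n) v _ (yy_le n) hs
    have h2 := norm_log_ln (yy n) v (yy_le n)
    have h3 : ‖log (ln (yy n) v)‖ ≤ Real.exp (2 * |v| + (2 * |yy n| + 8)) := by
      have := Real.add_one_le_exp (2 * |v| + (2 * |yy n| + 8))
      linarith
    have h4 : ‖((Real.exp ((‖s‖ + 2) * (2 * |yy n| + 8)) * Real.exp (2 * (‖s‖ + 2) * |v|) : ℝ) : ℂ)‖ =
      Real.exp (2 * |v| + (2 * |yy n| + 8)) * (Real.exp ((‖s‖ + 1) * (2 * |yy n| + 8)) * Real.exp (2 * (‖s‖ + 1) * |v|)) := by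
      rw [norm_real, Real.norm_of_nonneg (by positivity), ← Real.exp_add, ← Real.exp_add, ← Real.exp_add]
      congr 1; ring
    rw [h4]
    exact mul_le_mul h3 h1 (norm_nonneg _) (by positivity)
  · refine Integrable.const_mul (Integrable.norm ?_) _
    refine integrable_of_bound _ ?_ (Real.exp ((‖s‖ + 2) * (2 * |yy n| + 8)) * Real.exp ((2 * (‖s‖ + 2)) ^ 2 + 2 * Real.pi * |yy n| ^ 2)) 0 ?_
    · exact (by fun_prop : Continuous fun v : ℝ => ((Real.exp ((‖s‖ + 2) * (2 * |yy n| + 8)) * Real.exp (2 * (‖s‖ + 2) * |v|) : ℝ) : ℂ)).mul (cont_f_ln n)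
    · intro v _
      rw [norm_mul, norm_real, Real.norm_of_nonneg (by positivity)]
      have h1 := f_le_of _ _ (D_half_ge n v)
      have h2 := exp_comb (2 * (‖s‖ + 2)) v (yy n) _ le_rfl
      have h3 := mul_le_mul_of_nonneg_left h1 (Real.exp_pos (2 * (‖s‖ + 2) * |v|)).le
      have h4 := mul_le_mul_of_nonneg_left (h3.trans h2) (Real.exp_pos ((‖s‖ + 2) * (2 * |yy n| + 8))).le
      linarith
  · refine ae_of_all _ fun v s' hs' => ?_
    have hx := slitPlane_ne_zero (U_slit (ln_mem_U _ v (yy_le n)))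
    have h1 := ((hasDerivAt_id s').neg.const_cpow (c := ln (yy n) v) (Or.inl hx))
    have h2 := (h1.mul_const (f (ln (yy n) v))).const_mul (1 + I)
    refine h2.congr_deriv ?_
    simp only [Pi.neg_apply, id]
    ring
end RS

namespace RS
open Complex MeasureTheory Set Filter Topology

theorem gi_real (σ b : ℝ) (hs : 0 < σ) (hb : 0 < b) :
    IntegrableOn (fun r : ℝ => r ^ (σ - 1) * Real.exp (-(b * r))) (Ioi 0) := by
  have := integrableOn_rpow_mul_exp_neg_mul_rpow (s := σ - 1) (p := 1) (b := b) (by linarith) one_pos hb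
  simpa using this

theorem cont_rpow_Ioi (s : ℂ) : ContinuousOn (fun r : ℝ => (r : ℂ) ^ s) (Ioi 0) := by
  intro r hr
  exact (continuousAt_ofReal_cpow_const r s (Or.inr (ne_of_gt hr))).continuousWithinAt

theorem gi_complex (s z : ℂ) (hs : 0 < s.re) (hz : 0 < z.re) :
    IntegrableOn (fun r : ℝ => (r : ℂ) ^ (s - 1) * cexp (-(z * r))) (Ioi 0) := by
  refine Integrable.mono' (gi_real s.re z.re hs hz) ?_ ?_
  · refine ContinuousOn.aestronglyMeasurable ?_ measurableSet_Ioi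
    exact (cont_rpow_Ioi _).mul (by fun_prop)
  · filter_upwards [ae_restrict_mem measurableSet_Ioi] with r hr
    rw [norm_mul, norm_cpow_eq_rpow_re_of_pos hr, norm_exp]
    simp

theorem gamma_diff (s z : ℂ) (hs : 0 < s.re) (hz : 0 < z.re) :
    DifferentiableAt ℂ (fun z => ∫ r : ℝ in Ioi 0, (r : ℂ) ^ (s - 1) * cexp (-(z * r))) z := by
  have := hasDerivAt_integral_of_dominated_loc_of_deriv_le (μ := volume.restrict (Ioi 0)) (𝕜 := ℂ)
    (F := fun z (r : ℝ) => (r : ℂ) ^ (s - 1) * cexp (-(z * r)))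
    (F' := fun z (r : ℝ) => (r : ℂ) ^ (s - 1) * (cexp (-(z * r)) * (-r))) (x₀ := z)
    (s := Metric.ball z (z.re / 2))
    (bound := fun r : ℝ => r ^ (s.re + 1 - 1) * Real.exp (-(z.re / 2 * r)))
    (Metric.ball_mem_nhds z (by linarith)) ?_ ?_ ?_ ?_ ?_ ?_
  · exact this.2.differentiableAt
  · refine Eventually.of_forall fun s => ?_
    refine ContinuousOn.aestronglyMeasurable ?_ measurableSet_Ioi
    exact (cont_rpow_Ioi _).mul (by fun_prop)
  · exact gi_complex s z hs hz
  · refine ContinuousOn.aestronglyMeasurable ?_ measurableSet_Ioi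
    exact (cont_rpow_Ioi _).mul (by fun_prop)
  · filter_upwards [ae_restrict_mem measurableSet_Ioi] with r hr w hw
    have hr : 0 < r := hr
    rw [norm_mul, norm_mul, norm_cpow_eq_rpow_re_of_pos hr, norm_exp, norm_neg, norm_real, Real.norm_of_nonneg hr.le,
      add_sub_cancel_right]
    have h1 : z.re / 2 ≤ w.re := by
      rw [Metric.mem_ball, dist_comm, dist_eq] at hw
      have := (abs_le.mp ((abs_re_le_norm (z - w)).trans hw.le)).2
      simp at this; linarith
    have h2 : r ^ s.re = r ^ (s - 1).re * r := by
      rw [sub_re, one_re, Real.rpow_sub_one hr.ne']; field_simp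
    rw [h2]
    have h3 : Real.exp (-(w * r)).re ≤ Real.exp (-(z.re / 2 * r)) := by
      apply Real.exp_le_exp.mpr; simp; nlinarith
    calc _ = r ^ (s - 1).re * r * Real.exp (-(w * r)).re := by ring
      _ ≤ _ := by gcongr
  · exact gi_real _ _ (by linarith) (by linarith)
  · refine ae_of_all _ fun r w _ => ?_
    refine HasDerivAt.const_mul _ (HasDerivAt.cexp ?_)
    have := ((hasDerivAt_id w).mul_const (r : ℂ)).neg
    rw [one_mul] at this
    exact this

theorem gamma_complex (s z : ℂ) (hs : 0 < s.re) (hz : 0 < z.re) :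
    ∫ r : ℝ in Ioi 0, (r : ℂ) ^ (s - 1) * cexp (-(z * r)) = (1 / z) ^ s * Gamma s := by
  have hU : IsOpen {z : ℂ | 0 < z.re} := isOpen_lt continuous_const continuous_re
  have h1 : AnalyticOnNhd ℂ (fun z => ∫ r : ℝ in Ioi 0, (r : ℂ) ^ (s - 1) * cexp (-(z * r))) {z : ℂ | 0 < z.re} :=
    DifferentiableOn.analyticOnNhd (fun z hz => (gamma_diff s z hs hz).differentiableWithinAt) hU
  have h2 : AnalyticOnNhd ℂ (fun z => (1 / z) ^ s * Gamma s) {z : ℂ | 0 < z.re} := by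
    refine DifferentiableOn.analyticOnNhd (fun z hz => DifferentiableAt.differentiableWithinAt ?_) hU
    have hz : 0 < z.re := hz
    have h0 : z ≠ 0 := by rintro rfl; simp at hz
    refine DifferentiableAt.mul_const (DifferentiableAt.cpow_const ?_ ?_) _
    · exact (differentiableAt_const _).div differentiableAt_id h0
    · left
      rw [one_div, inv_re]
      have := normSq_pos.mpr h0
      positivity
  refine h1.eqOn_of_preconnected_of_frequently_eq h2 (convex_halfSpace_re_gt 0).isPreconnected
    (show (1 : ℂ) ∈ _ by simp) ?_ hz
  have t : Tendsto (fun n : ℕ => ((1 + 1 / ((n : ℝ) + 1) : ℝ) : ℂ)) atTop (𝓝[≠] 1) := by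
    refine tendsto_nhdsWithin_iff.mpr ⟨?_, Eventually.of_forall fun n => ?_⟩
    · have := (tendsto_one_div_add_atTop_nhds_zero_nat (𝕜 := ℝ)).const_add 1
      rw [add_zero] at this
      exact (continuous_ofReal.tendsto 1).comp this
    · have : (0 : ℝ) < 1 / ((n : ℝ) + 1) := by positivity
      intro h
      have := congrArg re (mem_singleton_iff.mp h)
      rw [ofReal_re, one_re] at this
      linarith
  refine t.frequently (Frequently.of_forall fun n => ?_)
  have hpos : 0 < (1 + 1 / ((n : ℝ) + 1) : ℝ) := by positivity
  exact integral_cpow_mul_exp_neg_mul_Ioi hs hpos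
end RS

namespace RS
open Complex MeasureTheory Set Filter Topology

theorem kap_ne : (1 + I : ℂ) ≠ 0 := by
  intro h; have := congrArg re h; simp at this

theorem log_of_exp (L a : ℝ) (h1 : -Real.pi < a) (h2 : a ≤ Real.pi) :
    log (cexp (L + a * I)) = L + a * I := log_exp (by simpa using h1) (by simpa using h2)

theorem one_add_I_eq : (1 + I : ℂ) = cexp (Real.log (Real.sqrt 2) + (Real.pi / 4 : ℝ) * I) := by
  rw [Complex.exp_add, ← ofReal_exp, Real.exp_log (by positivity), exp_mul_I,
      ← ofReal_cos, ← ofReal_sin, Real.cos_pi_div_four, Real.sin_pi_div_four]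
  have := Real.mul_self_sqrt (show (0 : ℝ) ≤ 2 by norm_num)
  have h : ((Real.sqrt 2 : ℝ) : ℂ) * ((Real.sqrt 2 : ℝ) : ℂ) = 2 := by rw [← ofReal_mul, this]; simp
  push_cast
  linear_combination (-(1 + I) / 2) * h

theorem log_kap : log (1 + I) = Real.log (Real.sqrt 2) + (Real.pi / 4 : ℝ) * I := by
  rw [one_add_I_eq, log_of_exp _ _ (by linarith [Real.pi_pos]) (by linarith [Real.pi_pos])]

theorem log_neg_kap : log (-(1 + I)) = Real.log (Real.sqrt 2) + (-(3 * Real.pi / 4) : ℝ) * I := by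
  rw [← log_of_exp _ _ (by linarith [Real.pi_pos]) (by linarith [Real.pi_pos]), one_add_I_eq]
  congr 1
  have : ((Real.log (Real.sqrt 2) : ℝ) : ℂ) + (Real.pi / 4 : ℝ) * I =
    Real.log (Real.sqrt 2) + (-(3 * Real.pi / 4) : ℝ) * I + Real.pi * I := by push_cast; ring
  rw [this, Complex.exp_add _ (Real.pi * I), exp_pi_mul_I]; ring

theorem arg_U {x : ℂ} (hx : x ∈ U) : x.arg ≤ Real.pi / 2 := by
  have hx : 0 < x.re - x.im := hx
  rcases le_or_gt 0 x.im with h | h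
  · have : 0 ≤ x.re := by linarith
    exact (abs_le.mp (abs_arg_le_pi_div_two_iff.mpr this)).2
  · have := arg_neg_iff.mpr h
    linarith [Real.pi_pos]

theorem log_mul_kap {x : ℂ} (hx : x ∈ U) : log (x * (1 + I)) = log x + log (1 + I) := by
  have h0 := slitPlane_ne_zero (U_slit hx)
  conv_lhs => rw [← exp_log h0, ← exp_log kap_ne, ← Complex.exp_add]
  have h1 := arg_U hx
  have h2 := neg_pi_lt_arg x
  have hp := Real.pi_pos
  apply log_exp <;> simp [log_kap, log_im] <;> linarith

theorem gamma_line (s : ℂ) (hs : 0 < s.re) (v : ℝ) :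
    ∫ r : ℝ in Ioi 0, (r : ℂ) ^ (s - 1) * cexp (-(ln (yy 0) v * ((1 + I) * r))) =
      (ln (yy 0) v) ^ (-s) * (1 + I) ^ (-s) * Gamma s := by
  set x := ln (yy 0) v with hx
  have hU : x ∈ U := ln_mem_U _ _ (yy_le 0)
  have h0 := slitPlane_ne_zero (U_slit hU)
  have e : x * (1 + I) = 1 / 2 + 2 * v * I := by
    rw [hx]; unfold ln yy; push_cast
    linear_combination (v - 1 / 4 * I - 1 / 2 : ℂ) * I_sq
  have hre : 0 < (x * (1 + I)).re := by rw [e]; simp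
  have := gamma_complex s _ hs hre
  simp only [← mul_assoc] at this ⊢
  rw [this]
  congr 1
  rw [one_div, cpow_def_of_ne_zero (inv_ne_zero (mul_ne_zero h0 kap_ne)), cpow_def_of_ne_zero h0,
    cpow_def_of_ne_zero kap_ne, ← Complex.exp_add, log_inv, log_mul_kap hU]
  · congr 1; ring
  · intro h
    have := (abs_arg_lt_pi_div_two_iff.mpr (Or.inl hre))
    rw [h, abs_of_pos Real.pi_pos] at this
    linarith [Real.pi_pos]

theorem fubini_integrable (s : ℂ) (hs : 0 < s.re) :
    Integrable (Function.uncurry fun (v r : ℝ) => (1 + I) * (cexp (-(ln (yy 0) v * ((1 + I) * r))) * f (ln (yy 0) v)) * (r : ℂ) ^ (s - 1))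
      (volume.prod (volume.restrict (Ioi 0))) := by
  have h1 : Integrable (fun v => (1 + I) * f (ln (yy 0) v)) := by
    simpa using (integrable_exp_f 0 0).const_mul (1 + I)
  have h2 : Integrable (fun r : ℝ => (r : ℂ) ^ (s - 1) * cexp (-((1 / 2 : ℝ) * r))) (volume.restrict (Ioi 0)) := by
    exact gi_complex s ((1 / 2 : ℝ) : ℂ) hs (by simp)
  have h5 := h1.mul_prod h2
  have h6 := h5.mul_bdd (c := 1) (g := fun p : ℝ × ℝ => cexp (-(2 * p.1 * p.2 * I)))
    (by refine Continuous.aestronglyMeasurable ?_; fun_prop)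
    (ae_of_all _ fun p => by rw [norm_exp]; simp)
  refine h6.congr (ae_of_all _ fun p => ?_)
  have e : cexp (-(ln (yy 0) p.1 * ((1 + I) * p.2))) = cexp (-((1 / 2 : ℝ) * p.2)) * cexp (-(2 * p.1 * p.2 * I)) := by
    rw [← Complex.exp_add]
    congr 1
    unfold ln yy; push_cast
    linear_combination (-(p.1 - 1 / 4 * I - 1 / 2 : ℂ) * p.2) * I_sq
  simp only [Function.uncurry]
  rw [e]; ring

noncomputable def M (u : ℂ) : ℂ := J (fun x => cexp (-(x * u))) 0

theorem gamma_Jp (s : ℂ) (hs : 0 < s.re) :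
    (∫ r : ℝ in Ioi 0, M ((1 + I) * r) * (r : ℂ) ^ (s - 1)) = (1 + I) ^ (-s) * Gamma s * Jp 0 s := by
  have h := integral_integral_swap (fubini_integrable s hs)
  have h1 : ∀ r : ℝ, M ((1 + I) * r) * (r : ℂ) ^ (s - 1) =
      ∫ v : ℝ, (1 + I) * (cexp (-(ln (yy 0) v * ((1 + I) * r))) * f (ln (yy 0) v)) * (r : ℂ) ^ (s - 1) := by
    intro r
    rw [integral_mul_const]
    rfl
  simp_rw [h1]
  rw [← h]
  unfold Jp J
  rw [← integral_const_mul]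
  congr 1
  ext v
  have := gamma_line s hs v
  calc _ = ∫ r : ℝ in Ioi 0, ((1 + I) * f (ln (yy 0) v)) * ((r : ℂ) ^ (s - 1) * cexp (-(ln (yy 0) v * ((1 + I) * r)))) := by
        congr 1; ext r; ring
    _ = _ := by rw [integral_const_mul, this]; ring

theorem M_integrable (s : ℂ) (hs : 0 < s.re) :
    IntegrableOn (fun r : ℝ => M ((1 + I) * r) * (r : ℂ) ^ (s - 1)) (Ioi 0) := by
  have := (fubini_integrable s hs).integral_prod_right
  refine this.congr (ae_of_all _ fun r => ?_)
  simp only [Function.uncurry]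
  rw [integral_mul_const]
  rfl
end RS

namespace RS
open Complex MeasureTheory Set Filter Topology

noncomputable def A (r : ℝ) : ℂ :=
  cexp (-(r ^ 2 / (2 * Real.pi))) / (cexp ((1 + I) * r / 2) - cexp (-((1 + I) * r / 2)))

theorem norm_exp_kap (r : ℝ) : ‖cexp ((1 + I) * r)‖ = Real.exp r := by
  rw [norm_exp]; simp

theorem exp_kap_sub_ge (r : ℝ) (hr : 0 < r) : r * Real.exp (1 / 2 * r) ≤ ‖cexp ((1 + I) * r) - 1‖ := by
  have h1 : Real.exp r - 1 ≤ ‖cexp ((1 + I) * r) - 1‖ := by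
    rw [← norm_exp_kap r]
    simpa using norm_sub_norm_le (cexp ((1 + I) * r)) 1
  refine le_trans ?_ h1
  have h2 := Real.self_le_sinh_iff.mpr (show 0 ≤ r / 2 by linarith)
  rw [Real.sinh_eq] at h2
  have e1 : Real.exp (r / 2) * Real.exp (r / 2) = Real.exp r := by rw [← Real.exp_add]; ring_nf
  have e2 : Real.exp (-(r / 2)) * Real.exp (r / 2) = 1 := by rw [← Real.exp_add]; simp
  have e3 : 1 / 2 * r = r / 2 := by ring
  rw [e3]
  have := mul_le_mul_of_nonneg_right h2 (Real.exp_pos (r / 2)).le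
  nlinarith

theorem exp_kap_ne (r : ℝ) (hr : 0 < r) : cexp ((1 + I) * r) - 1 ≠ 0 := by
  have := exp_kap_sub_ge r hr
  intro h
  rw [h, norm_zero] at this
  have : 0 < r * Real.exp (1 / 2 * r) := by positivity
  linarith

theorem M_eq (r : ℝ) (hr : 0 < r) : M ((1 + I) * r) = A r - 1 / (cexp ((1 + I) * r) - 1) := by
  have h0 := exp_kap_ne r hr
  have hm := mordell ((1 + I) * r)
  have hM : M ((1 + I) * r) = (cexp (I * ((1 + I) * r) ^ 2 / (4 * Real.pi) + ((1 + I) * r) / 2) - 1) / (cexp ((1 + I) * r) - 1) := by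
    rw [eq_div_iff h0, ← hm, mul_comm]; rfl
  have hp : (Real.pi : ℂ) ≠ 0 := by exact_mod_cast Real.pi_ne_zero
  have e : I * ((1 + I) * r) ^ 2 / (4 * Real.pi) = -((r : ℂ) ^ 2 / (2 * Real.pi)) := by
    field_simp
    linear_combination (4 + 2 * I) * (r : ℂ) ^ 2 * I_sq
  rw [hM, e, sub_div]
  congr 1
  unfold A
  have h1 := Complex.exp_ne_zero ((1 + I) * r / 2)
  have e1 : cexp ((1 + I) * r) = cexp ((1 + I) * r / 2) * cexp ((1 + I) * r / 2) := by
    rw [← Complex.exp_add]; ring_nf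
  rw [e1] at h0
  rw [e1, Complex.exp_add, Complex.exp_neg ((1 + I) * r / 2)]
  have h2 : cexp ((1 + I) * r / 2) - (cexp ((1 + I) * r / 2))⁻¹ = (cexp ((1 + I) * r / 2) * cexp ((1 + I) * r / 2) - 1) / cexp ((1 + I) * r / 2) := by
    field_simp
  rw [h2]
  field_simp

theorem B_integrable (s : ℂ) (hs : 1 < s.re) :
    IntegrableOn (fun r : ℝ => 1 / (cexp ((1 + I) * r) - 1) * (r : ℂ) ^ (s - 1)) (Ioi 0) := by
  refine Integrable.mono' (gi_real (s.re - 1) (1 / 2) (by linarith) (by norm_num)) ?_ ?_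
  · refine ContinuousOn.aestronglyMeasurable ?_ measurableSet_Ioi
    refine ContinuousOn.mul (ContinuousOn.div continuousOn_const (by fun_prop) fun r hr => exp_kap_ne r hr) (cont_rpow_Ioi _)
  · filter_upwards [ae_restrict_mem measurableSet_Ioi] with r hr
    have hr : 0 < r := hr
    rw [norm_mul, norm_cpow_eq_rpow_re_of_pos hr, norm_div, norm_one, sub_re, one_re, Real.rpow_sub_one hr.ne' (s.re - 1),
      Real.exp_neg]
    have := exp_kap_sub_ge r hr
    have hpos : 0 < r * Real.exp (1 / 2 * r) := by positivity
    calc _ ≤ 1 / (r * Real.exp (1 / 2 * r)) * r ^ (s.re - 1) := by gcongr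
      _ = _ := by field_simp

theorem B_integral (s : ℂ) (hs : 1 < s.re) :
    ∫ r : ℝ in Ioi 0, 1 / (cexp ((1 + I) * r) - 1) * (r : ℂ) ^ (s - 1) =
      (1 + I) ^ (-s) * Gamma s * riemannZeta s := by
  have hs0 : 0 < s.re := by linarith
  have hre : ∀ n : ℕ, 0 < (((n : ℂ) + 1) * (1 + I)).re := by
    intro n; simp; positivity
  have key := hasSum_integral_of_summable_integral_norm (μ := volume.restrict (Ioi 0))
    (F := fun (n : ℕ) (r : ℝ) => (r : ℂ) ^ (s - 1) * cexp (-((((n : ℂ) + 1) * (1 + I)) * r)))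
    (fun n => gi_complex s _ hs0 (hre n)) ?_
  · have e1 : ∀ n : ℕ, ∫ r : ℝ in Ioi 0, (r : ℂ) ^ (s - 1) * cexp (-((((n : ℂ) + 1) * (1 + I)) * r)) =
        (1 + I) ^ (-s) * Gamma s * (1 / ((n : ℂ) + 1) ^ s) := by
      intro n
      rw [gamma_complex s _ hs0 (hre n)]
      have hn : (0 : ℝ) < (n : ℝ) + 1 := by positivity
      have hn' : ((n : ℂ) + 1) ≠ 0 := Nat.cast_add_one_ne_zero n
      have hc : ((n : ℂ) + 1) = (((n : ℝ) + 1 : ℝ) : ℂ) := by push_cast; rfl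
      rw [one_div, cpow_def_of_ne_zero (inv_ne_zero (mul_ne_zero hn' kap_ne)), log_inv, one_div, ← cpow_neg,
        cpow_def_of_ne_zero hn', cpow_def_of_ne_zero kap_ne]
      · rw [mul_right_comm, ← Complex.exp_add]
        congr 2
        rw [hc, log_ofReal_mul hn kap_ne, ofReal_log hn.le]; ring
      · intro h
        have := (abs_arg_lt_pi_div_two_iff.mpr (Or.inl (hre n)))
        rw [h, abs_of_pos Real.pi_pos] at this
        linarith [Real.pi_pos]
    simp_rw [e1] at key
    rw [zeta_eq_tsum_one_div_nat_add_one_cpow hs, ← tsum_mul_left, key.tsum_eq]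
    refine setIntegral_congr_fun measurableSet_Ioi fun r hr => ?_
    have hr : 0 < r := hr
    rw [tsum_mul_left, mul_comm]
    congr 1
    have e2 : ∀ n : ℕ, cexp (-((((n : ℂ) + 1) * (1 + I)) * r)) = cexp (-((1 + I) * r)) * cexp (-((1 + I) * r)) ^ n := by
      intro n; rw [← Complex.exp_nat_mul, ← Complex.exp_add]; congr 1; ring
    simp_rw [e2]
    rw [tsum_mul_left, tsum_geometric_of_norm_lt_one]
    · have h0 := exp_kap_ne r hr
      have h1 := Complex.exp_ne_zero ((1 + I) * r)
      have h2 : 1 - cexp (-((1 + I) * r)) = (cexp ((1 + I) * r) - 1) / cexp ((1 + I) * r) := by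
        rw [Complex.exp_neg]; field_simp
      rw [h2, Complex.exp_neg]
      field_simp
    · rw [norm_exp]; simp [hr]
  · have e1 : ∀ n : ℕ, ∫ r : ℝ in Ioi 0, ‖(r : ℂ) ^ (s - 1) * cexp (-((((n : ℂ) + 1) * (1 + I)) * r))‖ =
        (1 / ((n : ℝ) + 1) ^ s.re) * Real.Gamma s.re := by
      intro n
      have hn : (0 : ℝ) < (n : ℝ) + 1 := by positivity
      have e0 : 1 / ((n : ℝ) + 1) ^ s.re = (1 / ((n : ℝ) + 1)) ^ s.re := by
        rw [one_div, one_div, Real.inv_rpow hn.le]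
      rw [e0, ← Real.integral_rpow_mul_exp_neg_mul_Ioi hs0 hn]
      refine setIntegral_congr_fun measurableSet_Ioi fun r hr => ?_
      rw [norm_mul, norm_cpow_eq_rpow_re_of_pos hr, norm_exp]
      simp
    simp_rw [e1]
    refine Summable.mul_right _ ?_
    have := (summable_nat_add_iff 1).mpr (Real.summable_one_div_nat_rpow.mpr hs)
    simpa using this

theorem A_integral (s : ℂ) (hs : 1 < s.re) :
    ∫ r : ℝ in Ioi 0, A r * (r : ℂ) ^ (s - 1) = (1 + I) ^ (-s) * Gamma s * (Jp 0 s + riemannZeta s) := by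
  rw [mul_add, ← B_integral s hs, ← gamma_Jp s (by linarith), ← integral_add (M_integrable s (by linarith)) (B_integrable s hs)]
  refine setIntegral_congr_fun measurableSet_Ioi fun r hr => ?_
  rw [M_eq r hr]; ring
end RS

namespace RS
open Complex MeasureTheory Set Filter Topology

noncomputable def φ0 (q x : ℂ) : ℂ := x ^ (q - 1) * (cexp (I * Real.pi * x ^ 2) / dslope D 0 x)

theorem D_zero : D 0 = 0 := by simp [D]

theorem φ0_eq (q x : ℂ) (hq : 1 < q.re) : φ0 q x = x ^ q * f x := by
  unfold φ0 f
  have hq0 : q ≠ 0 := by rintro rfl; simp at hq; linarith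
  have hq1 : q - 1 ≠ 0 := by
    intro h; rw [sub_eq_zero.mp h] at hq; simp at hq
  by_cases hx : x = 0
  · rw [hx, zero_cpow hq0, zero_cpow hq1]; simp
  · rw [dslope_of_ne _ hx, slope_def_field, D_zero, cpow_sub _ _ hx, cpow_one]
    by_cases h0 : D x = 0
    · simp [h0]
    · field_simp
      simp only [sub_zero]
      ring

theorem φ0_cont (q x : ℂ) (hq : 1 < q.re) (h1 : 0 ≤ x.re - x.im) (h2 : x.re - x.im ≤ 1 / 2) : ContinuousAt (φ0 q) x := by
  have d2 : DifferentiableAt ℂ (dslope D 0) x :=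
      ((differentiableOn_dslope (s := univ) univ_mem).mpr diff_D.differentiableOn).differentiableAt univ_mem
  unfold φ0
  refine ContinuousAt.mul (continuousAt_cpow_const_of_re_pos ?_ (by simpa using hq)) (ContinuousAt.div (by fun_prop) d2.continuousAt ?_)
  · by_cases h : x.im = 0
    · left; linarith
    · right; exact h
  · by_cases hx : x = 0
    · rw [hx, dslope_same]; simpa using deriv_D_ne 0
    · rw [dslope_of_ne _ hx, slope_def_field, D_zero, sub_zero]
      exact div_ne_zero (D_ne_strip 0 x (by simpa using hx) (by simp; linarith) (by simp; linarith)) (sub_ne_zero.mpr hx)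

theorem φ0_diff (q x : ℂ) (h1 : 0 < x.re - x.im) (h2 : x.re - x.im ≤ 1 / 2) : DifferentiableAt ℂ (φ0 q) x := by
  have d2 : DifferentiableAt ℂ (dslope D 0) x :=
      ((differentiableOn_dslope (s := univ) univ_mem).mpr diff_D.differentiableOn).differentiableAt univ_mem
  have hx : x ≠ 0 := by rintro rfl; simp at h1
  unfold φ0
  refine DifferentiableAt.mul (DifferentiableAt.cpow_const differentiableAt_id (U_slit h1)) (DifferentiableAt.div (by fun_prop) d2 ?_)
  rw [dslope_of_ne _ hx, slope_def_field, D_zero, sub_zero]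
  exact div_ne_zero (D_ne_strip 0 x (by simpa using hx) (by simp; linarith) (by simp; linarith)) (sub_ne_zero.mpr hx)

theorem φ0_bound (q : ℂ) (hq : 1 < q.re) (v y : ℝ) (hy : |y| ≤ 1 / 4) (hv : 2 ≤ |v|) :
    ‖φ0 q (ln y v)‖ ≤ Real.exp (‖q‖ * 6) * Real.exp ((2 * ‖q‖) ^ 2 + 2 * Real.pi * (1 / 4) ^ 2) * Real.exp (-v ^ 2) := by
  have him : 1 ≤ |(ln y v).im| := by
    rw [ln_im]
    have t : |v| ≤ |v + y| + |y| := by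
      have := abs_sub (v + y) y
      simpa using this
    linarith
  have hge : 1 ≤ ‖ln y v‖ := him.trans (abs_im_le_norm _)
  have hne : ln y v ≠ 0 := by intro h; rw [h] at hge; simp at hge; linarith
  rw [φ0_eq q _ hq, norm_mul]
  have hf := f_le_of y v (D_ge _ him)
  have x1 := exp_comb (2 * ‖q‖) v y (1 / 4) hy
  have h3 : ‖(ln y v) ^ q‖ ≤ Real.exp (‖q‖ * 6) * Real.exp (2 * ‖q‖ * |v|) := by
    refine (norm_cpow_le _ _ hne).trans ?_
    rw [← Real.exp_add]
    apply Real.exp_le_exp.mpr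
    have h4 := norm_log_le' _ hne
    have h5 := norm_ln_le y v
    have h6 : ‖ln y v‖⁻¹ ≤ 1 := inv_le_one_of_one_le₀ hge
    have : ‖log (ln y v)‖ ≤ 6 + 2 * |v| := by linarith
    have := mul_le_mul_of_nonneg_left this (norm_nonneg q)
    linarith
  calc _ ≤ (Real.exp (‖q‖ * 6) * Real.exp (2 * ‖q‖ * |v|)) * Real.exp (-2 * Real.pi * (v ^ 2 - y ^ 2)) := by gcongr
    _ = Real.exp (‖q‖ * 6) * (Real.exp (2 * ‖q‖ * |v|) * Real.exp (-2 * Real.pi * (v ^ 2 - y ^ 2))) := by ring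
    _ ≤ _ := by
      rw [mul_assoc (Real.exp (‖q‖ * 6))]
      exact mul_le_mul_of_nonneg_left x1 (Real.exp_pos _).le

theorem Jp_line0 (q : ℂ) (hq : 1 < q.re) :
    Jp 0 (-q) = ∫ v : ℝ, (1 + I) * ((ln 0 v) ^ q * f (ln 0 v)) := by
  have hln : ∀ v y : ℝ, (1 + I) * ((v : ℂ) + y * I) = ln y v := fun v y => rfl
  have y0 : yy 0 = -1 / 4 := by unfold yy; norm_num
  have key := strip_shift (fun z => φ0 q ((1 + I) * z)) (-1 / 4) 0 (by norm_num) _ 2 ?_ ?_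
    (fun v y hy hv => φ0_bound q hq v y (by rw [abs_le]; constructor <;> linarith [hy.1, hy.2]) hv)
  · simp only [hln, φ0_eq q _ hq] at key
    unfold Jp J
    rw [integral_const_mul, integral_const_mul, ← key, y0, neg_neg]
  · intro z hz
    have hz : z.im ∈ Icc (-1 / 4) 0 := hz
    refine (ContinuousAt.comp (φ0_cont q _ hq ?_ ?_) (by fun_prop)).continuousWithinAt
    all_goals
      simp
      linarith [hz.1, hz.2]
  · intro z hz
    have hz : z.im ∈ Ioo (-1 / 4) 0 := hz
    refine (DifferentiableAt.comp z (φ0_diff q _ ?_ ?_) (by fun_prop)).differentiableWithinAt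
    all_goals
      simp
      linarith [hz.1, hz.2]

theorem line0_integrable (q : ℂ) (hq : 1 < q.re) :
    Integrable fun v : ℝ => (ln 0 v) ^ q * f (ln 0 v) := by
  simp_rw [← φ0_eq q _ hq]
  refine integrable_of_bound _ ?_ _ 2 (fun v hv => φ0_bound q hq v 0 (by simp) hv)
  rw [continuous_iff_continuousAt]
  intro v
  refine ContinuousAt.comp (φ0_cont q _ hq ?_ ?_) (continuous_ln 0).continuousAt <;> simp [ln_re, ln_im]

theorem f_neg (x : ℂ) : f (-x) = -f x := by
  unfold f D
  have e1 : I * Real.pi * -x = -(I * Real.pi * x) := by ring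
  rw [e1, neg_neg, neg_sq, ← neg_sub (cexp (I * Real.pi * x)), div_neg]

theorem Jp_half (q : ℂ) (hq : 1 < q.re) :
    Jp 0 (-q) = (1 + I) * ((1 + I) ^ q - (-(1 + I)) ^ q) * ∫ v : ℝ in Ioi 0, (v : ℂ) ^ q * f ((1 + I) * v) := by
  have hi := line0_integrable q hq
  rw [Jp_line0 q hq, integral_const_mul, ← intervalIntegral.integral_Iic_add_Ioi (b := 0) hi.integrableOn hi.integrableOn, mul_assoc]
  congr 1
  have l0 : ∀ v : ℝ, ln 0 v = v * (1 + I) := by intro v; unfold ln; simp [mul_comm]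
  have e1 : ∀ v : ℝ, 0 < v → ∀ c : ℂ, c ≠ 0 → ((v : ℂ) * c) ^ q = (v : ℂ) ^ q * c ^ q := by
    intro v hv c hc
    have hv' : (v : ℂ) ≠ 0 := by exact_mod_cast hv.ne'
    rw [cpow_def_of_ne_zero (mul_ne_zero hv' hc), cpow_def_of_ne_zero hv', cpow_def_of_ne_zero hc,
      log_ofReal_mul hv hc, ← Complex.exp_add, ofReal_log hv.le]
    congr 1; ring
  have p1 : ∫ v : ℝ in Ioi 0, (ln 0 v) ^ q * f (ln 0 v) = (1 + I) ^ q * ∫ v : ℝ in Ioi 0, (v : ℂ) ^ q * f ((1 + I) * v) := by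
    rw [← integral_const_mul]
    refine setIntegral_congr_fun measurableSet_Ioi fun v hv => ?_
    simp only [l0]
    rw [e1 v hv _ kap_ne, mul_comm (v : ℂ) (1 + I)]; ring
  have p2 : ∫ v : ℝ in Iic 0, (ln 0 v) ^ q * f (ln 0 v) = -(-(1 + I)) ^ q * ∫ v : ℝ in Ioi 0, (v : ℂ) ^ q * f ((1 + I) * v) := by
    have := integral_comp_neg_Iic 0 (fun v : ℝ => (ln 0 (-v)) ^ q * f (ln 0 (-v)))
    simp only [neg_neg, neg_zero] at this
    rw [this, ← integral_const_mul]
    refine setIntegral_congr_fun measurableSet_Ioi fun v hv => ?_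
    have e2 : ln 0 (-v) = v * (-(1 + I)) := by rw [l0]; push_cast; ring
    simp only [e2]
    rw [e1 v hv _ (neg_ne_zero.mpr kap_ne), mul_neg, f_neg, mul_comm (v : ℂ) (1 + I)]; ring
  rw [p1, p2]; ring

theorem A_conj (v : ℝ) : A (2 * Real.pi * v) = -(starRingEnd ℂ) (f ((1 + I) * v)) := by
  unfold A f D
  have hp : (Real.pi : ℂ) ≠ 0 := by exact_mod_cast Real.pi_ne_zero
  rw [map_div₀, map_sub, ← exp_conj, ← exp_conj, ← exp_conj, ← div_neg (cexp ((starRingEnd ℂ) _)), neg_sub]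
  simp only [map_mul, map_neg, map_pow, map_add, map_one, conj_I, conj_ofReal]
  congr 1
  · congr 1
    push_cast
    field_simp
    linear_combination (-2 + I) * (v : ℂ) ^ 2 * I_sq
  · congr 2
    · push_cast; linear_combination ((Real.pi * v : ℂ)) * I_sq
    · push_cast; linear_combination (-(Real.pi * v : ℂ)) * I_sq

theorem conj_cpow_pos (v : ℝ) (hv : 0 < v) (q : ℂ) : (starRingEnd ℂ) ((v : ℂ) ^ q) = (v : ℂ) ^ ((starRingEnd ℂ) q) := by
  have hv' : (v : ℂ) ≠ 0 := by exact_mod_cast hv.ne'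
  rw [cpow_def_of_ne_zero hv', cpow_def_of_ne_zero hv', ← exp_conj, map_mul, ← ofReal_log hv.le, conj_ofReal]

theorem conj_half (s : ℂ) : (starRingEnd ℂ) (∫ v : ℝ in Ioi 0, (v : ℂ) ^ ((starRingEnd ℂ) s - 1) * f ((1 + I) * v)) =
    -(2 * Real.pi : ℂ) ^ (-s) * ∫ r : ℝ in Ioi 0, A r * (r : ℂ) ^ (s - 1) := by
  have h2 : (0 : ℝ) < 2 * Real.pi := by positivity
  have h2' : (2 * Real.pi : ℂ) ≠ 0 := by exact_mod_cast h2.ne'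
  have := integral_comp_mul_left_Ioi (fun r : ℝ => A r * (r : ℂ) ^ (s - 1)) 0 h2
  rw [mul_zero, real_smul] at this
  have e : ∫ r : ℝ in Ioi 0, A r * (r : ℂ) ^ (s - 1) = (2 * Real.pi : ℂ) * ∫ v : ℝ in Ioi 0, A (2 * Real.pi * v) * ((2 * Real.pi * v : ℝ) : ℂ) ^ (s - 1) := by
    rw [this]; push_cast; field_simp
  rw [e, ← integral_conj, ← integral_const_mul, ← integral_const_mul]
  refine setIntegral_congr_fun measurableSet_Ioi fun v hv => ?_
  have hv : 0 < v := hv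
  rw [A_conj, map_mul, conj_cpow_pos v hv, map_sub, map_one, conj_conj]
  have e3 : ((2 * Real.pi * v : ℝ) : ℂ) ^ (s - 1) = (2 * Real.pi : ℂ) ^ (s - 1) * (v : ℂ) ^ (s - 1) := by
    rw [ofReal_mul, mul_cpow_ofReal_nonneg h2.le hv.le]; push_cast; rfl
  have e4 : (2 * Real.pi : ℂ) ^ (-s) * (2 * Real.pi) * (2 * Real.pi : ℂ) ^ (s - 1) = 1 := by
    nth_rw 2 [← cpow_one (2 * Real.pi : ℂ)]
    rw [← cpow_add _ _ h2', ← cpow_add _ _ h2', ← cpow_zero (2 * Real.pi : ℂ)]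
    congr 1; ring
  rw [e3]
  linear_combination (-(v : ℂ) ^ (s - 1) * (starRingEnd ℂ) (f ((1 + I) * v))) * e4

theorem fe_factor (s : ℂ) : (starRingEnd ℂ) ((1 + I) * ((1 + I) ^ ((starRingEnd ℂ) s - 1) - (-(1 + I)) ^ ((starRingEnd ℂ) s - 1))) * (1 + I) ^ (-s) =
    2 * Complex.cos (Real.pi * s / 2) := by
  have hk := kap_ne
  have e1 : (1 + I : ℂ) * (1 + I) ^ ((starRingEnd ℂ) s - 1) = (1 + I) ^ ((starRingEnd ℂ) s) := by
    rw [cpow_sub _ _ hk, cpow_one]; field_simp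
  have e2 : (1 + I : ℂ) * (-(1 + I)) ^ ((starRingEnd ℂ) s - 1) = -(-(1 + I)) ^ ((starRingEnd ℂ) s) := by
    rw [cpow_sub _ _ (neg_ne_zero.mpr hk), cpow_one]; field_simp
  rw [mul_sub, e1, e2, cpow_def_of_ne_zero hk, cpow_def_of_ne_zero (neg_ne_zero.mpr hk), cpow_def_of_ne_zero hk, log_kap, log_neg_kap,
    sub_neg_eq_add, map_add, ← exp_conj, ← exp_conj, Complex.cos]
  simp only [map_mul, map_add, conj_conj, conj_ofReal, conj_I]
  rw [add_mul, ← Complex.exp_add, ← Complex.exp_add, mul_div_cancel₀ _ two_ne_zero, add_comm]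
  congr 2
  · push_cast; ring
  · push_cast; ring

theorem fe_big (s : ℂ) (hs : 2 < s.re) :
    (starRingEnd ℂ) (Jp 0 (1 - (starRingEnd ℂ) s)) =
      -(2 * Complex.cos (Real.pi * s / 2) * (2 * Real.pi : ℂ) ^ (-s) * Gamma s * (Jp 0 s + riemannZeta s)) := by
  have h := Jp_half ((starRingEnd ℂ) s - 1) (by simp; linarith)
  rw [neg_sub] at h
  rw [h, map_mul, conj_half, A_integral s (by linarith), ← fe_factor]
  ring
end RS

namespace RS
open Complex MeasureTheory Set Filter Topology

theorem fe_half (s : ℂ) (hs : 0 < s.im) :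
    (starRingEnd ℂ) (Jp 0 (1 - (starRingEnd ℂ) s)) =
      -(2 * Complex.cos (Real.pi * s / 2) * (2 * Real.pi : ℂ) ^ (-s) * Gamma s * (Jp 0 s + riemannZeta s)) := by
  have hU : IsOpen {z : ℂ | 0 < z.im} := isOpen_lt continuous_const continuous_im
  have h1 : AnalyticOnNhd ℂ (fun s => (starRingEnd ℂ) (Jp 0 (1 - (starRingEnd ℂ) s))) {z : ℂ | 0 < z.im} := by
    refine DifferentiableOn.analyticOnNhd (fun z hz => DifferentiableAt.differentiableWithinAt ?_) hU
    have : DifferentiableAt ℂ (fun z => Jp 0 (1 - z)) ((starRingEnd ℂ) z) := by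
      exact DifferentiableAt.comp (g := Jp 0) (f := fun z => 1 - z) ((starRingEnd ℂ) z)
        (hasDerivAt_Jp 0 _).differentiableAt (by fun_prop)
    have h := this.conj_conj
    rw [conj_conj] at h
    exact h
  have h2 : AnalyticOnNhd ℂ (fun s => -(2 * Complex.cos (Real.pi * s / 2) * (2 * Real.pi : ℂ) ^ (-s) * Gamma s * (Jp 0 s + riemannZeta s))) {z : ℂ | 0 < z.im} := by
    refine DifferentiableOn.analyticOnNhd (fun z hz => DifferentiableAt.differentiableWithinAt ?_) hU
    have hz : 0 < z.im := hz
    refine DifferentiableAt.neg (DifferentiableAt.mul (DifferentiableAt.mul (DifferentiableAt.mul (by fun_prop) ?_) ?_) (DifferentiableAt.add (hasDerivAt_Jp 0 _).differentiableAt ?_))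
    · refine DifferentiableAt.const_cpow (by fun_prop) (Or.inl ?_)
      have : (0 : ℝ) < 2 * Real.pi := by positivity
      exact_mod_cast this.ne'
    · refine differentiableAt_Gamma z fun m h => ?_
      rw [h] at hz; simp at hz
    · refine differentiableAt_riemannZeta fun h => ?_
      rw [h] at hz; simp at hz
  refine h1.eqOn_of_preconnected_of_eventuallyEq h2 (convex_halfSpace_im_gt 0).isPreconnected
    (show (3 + I : ℂ) ∈ _ by simp) ?_ hs
  have : {z : ℂ | 2 < z.re} ∈ 𝓝 (3 + I : ℂ) :=
    (isOpen_lt continuous_const continuous_re).mem_nhds (by simp; norm_num)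
  filter_upwards [this] with z hz
  exact fe_big z hz

noncomputable def W (t : ℝ) : ℂ := cexp (I * (riemannSiegelTheta t : ℂ))

theorem W_norm (t : ℝ) : ‖W t‖ = 1 := by
  unfold W; rw [mul_comm]; exact norm_exp_ofReal_mul_I _

theorem GammaR_eq (t : ℝ) : Gammaℝ (1 / 2 + I * t) = (‖Gammaℝ (1 / 2 + I * t)‖ : ℂ) * W t := by
  have hp : (Real.pi : ℂ) ≠ 0 := by exact_mod_cast Real.pi_ne_zero
  have h1 : Gammaℝ (1 / 2 + I * t) = (Real.pi : ℂ) ^ (-(1 / 2 + I * t) / 2) * Gamma (1 / 4 + I * (t / 2)) := by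
    rw [Gammaℝ_def]; congr 2; ring
  have h2 : (Real.pi : ℂ) ^ (-(1 / 2 + I * t) / 2) = ‖(Real.pi : ℂ) ^ (-(1 / 2 + I * t) / 2)‖ * cexp (I * (-(t / 2) * Real.log Real.pi : ℝ)) := by
    rw [norm_cpow_eq_rpow_re_of_pos Real.pi_pos, Real.rpow_def_of_pos Real.pi_pos, cpow_def_of_ne_zero hp, ofReal_exp, ← Complex.exp_add,
      ← ofReal_log Real.pi_pos.le]
    congr 1
    simp
    ring
  have h3 : Gamma (1 / 4 + I * (t / 2)) = ‖Gamma (1 / 4 + I * (t / 2))‖ * cexp (I * ((log (Gamma (1 / 4 + I * (t / 2)))).im : ℝ)) := by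
    rw [log_im]; rw [mul_comm I (((Gamma (1 / 4 + I * (t / 2))).arg : ℝ) : ℂ)]; exact (norm_mul_exp_arg_mul_I _).symm
  have h4 : W t = cexp (I * (-(t / 2) * Real.log Real.pi : ℝ)) * cexp (I * ((log (Gamma (1 / 4 + I * (t / 2)))).im : ℝ)) := by
    unfold W riemannSiegelTheta
    rw [← Complex.exp_add]; congr 1; push_cast; ring
  rw [h1, norm_mul, h4, ofReal_mul]
  nth_rw 1 [h2]
  nth_rw 1 [h3]
  ring

theorem GammaR_ne (t : ℝ) : Gammaℝ (1 / 2 + I * t) ≠ 0 := Gammaℝ_ne_zero_of_re_pos (by simp)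

theorem W_mul_conj (t : ℝ) : W t * (starRingEnd ℂ) (W t) = 1 := by
  rw [mul_conj, normSq_eq_norm_sq, W_norm]; simp

theorem GammaR_conj (s : ℂ) : Gammaℝ ((starRingEnd ℂ) s) = (starRingEnd ℂ) (Gammaℝ s) := by
  rw [Gammaℝ_def, Gammaℝ_def, map_mul, ← Gamma_conj, conj_cpow_pos _ Real.pi_pos]
  have : (starRingEnd ℂ) 2 = 2 := conj_ofNat 2
  simp [this]

theorem W_sq (t : ℝ) (ht : 0 < t) : Gammaℝ (1 / 2 + I * t) / Gammaℝ (1 - (1 / 2 + I * t)) = W t ^ 2 := by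
  have e : (1 - (1 / 2 + I * t) : ℂ) = (starRingEnd ℂ) (1 / 2 + I * t) := by
    have : (starRingEnd ℂ) 2 = 2 := conj_ofNat 2
    simp [this]; try ring
  have h0 : (‖Gammaℝ (1 / 2 + I * t)‖ : ℂ) ≠ 0 := by
    exact_mod_cast norm_ne_zero_iff.mpr (GammaR_ne t)
  have hc : (starRingEnd ℂ) (W t) ≠ 0 := by
    intro h; have := W_mul_conj t; rw [h, mul_zero] at this; exact zero_ne_one this
  rw [e, GammaR_conj, GammaR_eq t, map_mul, conj_ofReal, mul_div_mul_left]
  · rw [div_eq_iff hc]; linear_combination -W t * W_mul_conj t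
  · exact h0

theorem hardyZ_Jp (t : ℝ) (ht : 0 < t) : hardyZ t = -2 * (W t * Jp 0 (1 / 2 + I * t)).re := by
  have h := fe_half (1 / 2 + I * t) (by simpa using ht)
  have e : (1 - (starRingEnd ℂ) (1 / 2 + I * t) : ℂ) = 1 / 2 + I * t := by
    have : (starRingEnd ℂ) 2 = 2 := conj_ofNat 2
    simp [this]; try ring
  have h5 := Gammaℝ_div_Gammaℝ_one_sub (s := 1 / 2 + I * t) (fun n hn => by
    have := congrArg im hn
    simp at this
    linarith)
  rw [W_sq t ht, Gammaℂ_def] at h5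
  rw [e] at h
  have h6 : (starRingEnd ℂ) (Jp 0 (1 / 2 + I * t)) = -(W t ^ 2 * (Jp 0 (1 / 2 + I * t) + riemannZeta (1 / 2 + I * t))) := by
    rw [h, h5]; ring
  have h7 : W t * riemannZeta (1 / 2 + I * t) = -((starRingEnd ℂ) (W t * Jp 0 (1 / 2 + I * t))) - W t * Jp 0 (1 / 2 + I * t) := by
    rw [map_mul, h6]
    linear_combination (-W t * (Jp 0 (1 / 2 + I * t) + riemannZeta (1 / 2 + I * t))) * W_mul_conj t
  have h8 : hardyZ t = (W t * riemannZeta (1 / 2 + I * t)).re := rfl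
  rw [h8, h7, sub_re, neg_re, conj_re]
  ring

theorem hardyZ_N (N : ℕ) (t : ℝ) (ht : 0 < t) : hardyZ t =
    2 * (W t * ((∑ k ∈ Finset.Ico 1 (N + 1), (k : ℂ) ^ (-(1 / 2 + I * t) : ℂ)) - Jp N (1 / 2 + I * t))).re := by
  rw [hardyZ_Jp t ht, Jp_eq N]
  have : W t * ((∑ k ∈ Finset.Ico 1 (N + 1), (k : ℂ) ^ (-(1 / 2 + I * t) : ℂ)) - (Jp 0 (1 / 2 + I * t) + ∑ k ∈ Finset.Ico 1 (N + 1), (k : ℂ) ^ (-(1 / 2 + I * t) : ℂ))) = -(W t * Jp 0 (1 / 2 + I * t)) := by ring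
  rw [this, neg_re]; ring
end RS

namespace RS
open Complex MeasureTheory Set Filter Topology

noncomputable def ph (r : ℝ) : ℝ := (log (1 + (1 + I) * r)).im

theorem ph_slit (r : ℝ) : (1 + (1 + I) * r : ℂ) ∈ slitPlane := by
  rw [mem_slitPlane_iff]
  by_cases h : r = 0
  · left; simp [h]
  · right; simpa using h

theorem ph_deriv (r : ℝ) : HasDerivAt ph (1 / (1 + 2 * r + 2 * r ^ 2)) r := by
  have h1 : HasDerivAt (fun r : ℝ => (1 + (1 + I) * r : ℂ)) (1 + I) r := by
    have := ((hasDerivAt_id (r : ℂ)).const_mul (1 + I)).const_add 1 |>.comp_ofReal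
    simpa using this
  have h2 := h1.clog_real (ph_slit r)
  have h3 := (imCLM.hasFDerivAt.comp_hasDerivAt r h2)
  have e : imCLM ((1 + I) / (1 + (1 + I) * r)) = 1 / (1 + 2 * r + 2 * r ^ 2) := by
    rw [imCLM_apply, div_im]
    have : normSq (1 + (1 + I) * (r : ℂ)) = 1 + 2 * r + 2 * r ^ 2 := by
      rw [normSq_apply]; simp; ring
    rw [this]; simp; ring
  rw [e] at h3
  exact h3

theorem ph_zero : ph 0 = 0 := by simp [ph]

theorem ph_abs (r : ℝ) : |ph r| ≤ 2 * |r| := by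
  have := convex_univ.norm_image_sub_le_of_norm_hasDerivWithin_le (f := ph) (C := 2)
    (fun x _ => (ph_deriv x).hasDerivWithinAt) (fun x _ => ?_) (mem_univ 0) (mem_univ r)
  · simpa [ph_zero] using this
  · have h : 1 / 2 ≤ 1 + 2 * x + 2 * x ^ 2 := by nlinarith [sq_nonneg (2 * x + 1)]
    rw [Real.norm_of_nonneg (by positivity), div_le_iff₀ (by linarith)]
    linarith

theorem ph_le (r : ℝ) : ph r ≤ r + r ^ 2 / 2 := by
  set g : ℝ → ℝ := fun r => r + r ^ 2 / 2 - ph r with hg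
  have hd : ∀ r, HasDerivAt g (r * (3 + 4 * r + 2 * r ^ 2) / (1 + 2 * r + 2 * r ^ 2)) r := by
    intro r
    have h : 1 / 2 ≤ 1 + 2 * r + 2 * r ^ 2 := by nlinarith [sq_nonneg (2 * r + 1)]
    have h0 : 1 + 2 * r + 2 * r ^ 2 ≠ 0 := by linarith
    have := ((hasDerivAt_id r).add (((hasDerivAt_id r).pow 2).div_const 2)).sub (ph_deriv r)
    refine this.congr_deriv ?_
    rw [eq_div_iff h0, sub_mul, div_mul_cancel₀ _ h0]
    simp
    ring
  have hc : Continuous g := continuous_iff_continuousAt.mpr fun r => (hd r).continuousAt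
  have g0 : g 0 = 0 := by simp [hg, ph_zero]
  have hq : ∀ r : ℝ, 0 ≤ 3 + 4 * r + 2 * r ^ 2 := by intro r; nlinarith [sq_nonneg (r + 1)]
  have hq' : ∀ r : ℝ, 0 ≤ 1 + 2 * r + 2 * r ^ 2 := by intro r; nlinarith [sq_nonneg (2 * r + 1)]
  have : 0 ≤ g r := by
    rcases le_total 0 r with h | h
    · have := monotoneOn_of_deriv_nonneg (convex_Ici 0) hc.continuousOn
        (fun x _ => (hd x).differentiableAt.differentiableWithinAt)
        (fun x hx => by
          rw [interior_Ici] at hx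
          rw [(hd x).deriv]
          exact div_nonneg (mul_nonneg (le_of_lt hx) (hq x)) (hq' x))
        (mem_Ici.mpr le_rfl) (mem_Ici.mpr h) h
      rwa [g0] at this
    · have := antitoneOn_of_deriv_nonpos (convex_Iic 0) hc.continuousOn
        (fun x _ => (hd x).differentiableAt.differentiableWithinAt)
        (fun x hx => by
          rw [interior_Iic] at hx
          rw [(hd x).deriv]
          exact div_nonpos_of_nonpos_of_nonneg (mul_nonpos_of_nonpos_of_nonneg (le_of_lt hx) (hq x)) (hq' x))
        (mem_Iic.mpr h) (mem_Iic.mpr le_rfl) h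
      rwa [g0] at this
  simp only [hg] at this
  linarith

noncomputable def bb (N : ℕ) : ℝ := N + 1 / 2

noncomputable def xx (N : ℕ) (v : ℝ) : ℂ := ln (yy N) (v + bb N / 2)

theorem bb_pos (N : ℕ) : 0 < bb N := by unfold bb; positivity

theorem xx_re (N : ℕ) (v : ℝ) : (xx N v).re = bb N + v := by
  unfold xx; rw [ln_re]; unfold yy bb; ring

theorem xx_im (N : ℕ) (v : ℝ) : (xx N v).im = v := by
  unfold xx; rw [ln_im]; unfold yy bb; ring

theorem xx_eq (N : ℕ) (v : ℝ) : xx N v = (bb N : ℝ) * (1 + (1 + I) * ((v / bb N : ℝ) : ℂ)) := by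
  have := (bb_pos N).ne'
  apply Complex.ext
  · rw [xx_re]; simp; field_simp
  · rw [xx_im]; simp; field_simp

theorem xx_arg (N : ℕ) (v : ℝ) : (xx N v).arg = ph (v / bb N) := by
  rw [xx_eq, arg_real_mul _ (bb_pos N), ph, log_im]

theorem xx_norm_ge (N : ℕ) (v : ℝ) : bb N / 2 ≤ ‖xx N v‖ := by
  have hb := bb_pos N
  rw [← sq_le_sq₀ (by positivity) (norm_nonneg _), ← normSq_eq_norm_sq, normSq_apply, xx_re, xx_im]
  nlinarith [sq_nonneg (bb N + 2 * v)]

theorem xx_norm_le (N : ℕ) (v : ℝ) : ‖xx N v‖ ≤ bb N + 2 * |v| := by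
  have hb := bb_pos N
  refine (norm_le_abs_re_add_abs_im _).trans ?_
  rw [xx_re, xx_im]
  have := abs_add_le (bb N) v
  rw [abs_of_pos hb] at this
  linarith

theorem xx_ne (N : ℕ) (v : ℝ) : xx N v ≠ 0 := by
  have := xx_norm_ge N v
  have hb := bb_pos N
  intro h; rw [h, norm_zero] at this; linarith

theorem f_xx (N : ℕ) (v : ℝ) : ‖f (xx N v)‖ ≤ Real.exp (-(2 * Real.pi * ((bb N + v) * v))) := by
  refine (f_le_of _ _ (D_half_ge N _)).trans (Real.exp_le_exp.mpr (le_of_eq ?_))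
  unfold yy bb; ring

theorem phase (N : ℕ) (t K : ℝ) (h : |t - 2 * Real.pi * bb N ^ 2| ≤ K * bb N) (v : ℝ) :
    ‖(xx N v) ^ (-(1 / 2 + I * t) : ℂ) * f (xx N v)‖ ≤
      (bb N / 2) ^ (-(1 / 2) : ℝ) * Real.exp (-Real.pi * v ^ 2 + 2 * K * |v|) := by
  have hb := bb_pos N
  have e1 : ‖(xx N v) ^ (-(1 / 2 + I * t) : ℂ)‖ = ‖xx N v‖ ^ (-(1 / 2) : ℝ) * Real.exp (t * ph (v / bb N)) := by
    rw [norm_cpow_of_ne_zero (xx_ne N v), xx_arg, div_eq_mul_inv, ← Real.exp_neg]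
    congr 2
    · simp
    · simp; ring
  rw [norm_mul, e1, mul_assoc]
  refine mul_le_mul ?_ ?_ (by positivity) (by positivity)
  · exact Real.rpow_le_rpow_of_nonpos (by positivity) (xx_norm_ge N v) (by norm_num)
  · refine (mul_le_mul_of_nonneg_left (f_xx N v) (Real.exp_pos _).le).trans ?_
    rw [← Real.exp_add]
    apply Real.exp_le_exp.mpr
    have h1 := ph_le (v / bb N)
    have h2 := ph_abs (v / bb N)
    rw [abs_div, abs_of_pos hb] at h2
    have h3 : (t - 2 * Real.pi * bb N ^ 2) * ph (v / bb N) ≤ (K * bb N) * (2 * (|v| / bb N)) := by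
      refine (le_abs_self _).trans ?_
      rw [abs_mul]
      exact mul_le_mul h h2 (abs_nonneg _) ((abs_nonneg _).trans h)
    have h4 : (K * bb N) * (2 * (|v| / bb N)) = 2 * K * |v| := by field_simp
    have h5 : 2 * Real.pi * bb N ^ 2 * ph (v / bb N) ≤ 2 * Real.pi * bb N ^ 2 * (v / bb N + (v / bb N) ^ 2 / 2) := by
      gcongr
    have h6 : 2 * Real.pi * bb N ^ 2 * (v / bb N + (v / bb N) ^ 2 / 2) = 2 * Real.pi * (bb N * v + v ^ 2 / 2) := by
      field_simp
    nlinarith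

theorem gauss_dom (a v : ℝ) : Real.exp (-Real.pi * v ^ 2 + a * |v|) ≤ Real.exp (a ^ 2) * Real.exp (-1 * v ^ 2) := by
  rw [← Real.exp_add]
  apply Real.exp_le_exp.mpr
  have := Real.pi_gt_three
  have h : v ^ 2 = |v| ^ 2 := (sq_abs v).symm
  rw [h]
  nlinarith [sq_nonneg (a - |v|), sq_nonneg a, sq_nonneg (|v|)]

theorem J_bound (g : ℂ → ℂ) (N : ℕ) (B : ℝ) (h : ∀ v, ‖g (xx N v) * f (xx N v)‖ ≤ B * Real.exp (-1 * v ^ 2)) :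
    ‖J g N‖ ≤ 4 * B := by
  have hB : 0 ≤ B := by
    have := (norm_nonneg _).trans (h 0)
    simpa using this
  unfold J
  rw [integral_const_mul, norm_mul]
  have e : ∫ v : ℝ, g (ln (yy N) v) * f (ln (yy N) v) = ∫ v : ℝ, g (xx N v) * f (xx N v) := by
    unfold xx
    exact (integral_add_right_eq_self (fun v => g (ln (yy N) v) * f (ln (yy N) v)) (bb N / 2)).symm
  have h1 := norm_integral_le_of_norm_le ((integrable_exp_neg_mul_sq one_pos).const_mul B) (ae_of_all _ h)
  rw [integral_const_mul, integral_gaussian, div_one] at h1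
  rw [e]
  have h2 : ‖(1 + I : ℂ)‖ ≤ 2 := (norm_add_le _ _).trans (by simp; norm_num)
  have h3 : Real.sqrt Real.pi ≤ 2 := by
    rw [Real.sqrt_le_left (by norm_num)]; linarith [Real.pi_lt_four]
  calc _ ≤ 2 * (B * 2) := by
        refine mul_le_mul h2 (h1.trans ?_) (norm_nonneg _) (by norm_num)
        gcongr
    _ = _ := by ring

theorem Jp_bound (N : ℕ) (t K : ℝ) (h : |t - 2 * Real.pi * bb N ^ 2| ≤ K * bb N) :
    ‖Jp N (1 / 2 + I * t)‖ ≤ 4 * ((bb N / 2) ^ (-(1 / 2) : ℝ) * Real.exp ((2 * K) ^ 2)) := by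
  have hb := bb_pos N
  refine J_bound _ N _ fun v => ?_
  refine (phase N t K h v).trans ?_
  rw [mul_assoc ((bb N / 2) ^ (-(1 / 2) : ℝ))]
  have hB : 0 ≤ (bb N / 2) ^ (-(1 / 2) : ℝ) := by positivity
  exact mul_le_mul_of_nonneg_left (gauss_dom _ _) hB

theorem log_xx (N : ℕ) (hb1 : 1 ≤ bb N) (v : ℝ) : ‖log (xx N v)‖ ≤ (Real.log (bb N) + 5) * Real.exp (2 * |v|) := by
  have hb := bb_pos N
  have hl : 0 ≤ Real.log (bb N) := Real.log_nonneg hb1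
  have h1 : ‖log (xx N v)‖ ≤ |(log (xx N v)).re| + |(log (xx N v)).im| := norm_le_abs_re_add_abs_im _
  rw [log_re, log_im] at h1
  have h2 := abs_arg_le_pi (xx N v)
  have h3 := Real.pi_lt_four
  have hv := abs_nonneg v
  have h4 : Real.log ‖xx N v‖ ≤ Real.log (bb N) + 2 * |v| := by
    have : ‖xx N v‖ ≤ bb N * (1 + 2 * |v|) := (xx_norm_le N v).trans (by nlinarith)
    refine (Real.log_le_log (norm_pos_iff.mpr (xx_ne N v)) this).trans ?_
    rw [Real.log_mul hb.ne' (by positivity)]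
    have := Real.log_le_sub_one_of_pos (show 0 < 1 + 2 * |v| by positivity)
    linarith
  have h5 : Real.log (bb N) - 1 ≤ Real.log ‖xx N v‖ := by
    refine le_trans ?_ (Real.log_le_log (by positivity) (xx_norm_ge N v))
    rw [Real.log_div hb.ne' two_ne_zero]
    linarith [Real.log_two_lt_d9]
  have h6 : |Real.log ‖xx N v‖| ≤ Real.log (bb N) + 2 * |v| + 1 := by
    rw [abs_le]; constructor <;> linarith
  have h7 := Real.add_one_le_exp (2 * |v|)
  nlinarith

theorem Jl_bound (N : ℕ) (hb1 : 1 ≤ bb N) (t K : ℝ) (h : |t - 2 * Real.pi * bb N ^ 2| ≤ K * bb N) :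
    ‖Jl N (1 / 2 + I * t)‖ ≤ 4 * ((Real.log (bb N) + 5) * (bb N / 2) ^ (-(1 / 2) : ℝ) * Real.exp ((2 * K + 2) ^ 2)) := by
  have hb := bb_pos N
  have hl : 0 ≤ Real.log (bb N) := Real.log_nonneg hb1
  refine J_bound _ N _ fun v => ?_
  rw [mul_assoc, norm_mul, norm_neg]
  calc _ ≤ ((Real.log (bb N) + 5) * Real.exp (2 * |v|)) * ((bb N / 2) ^ (-(1 / 2) : ℝ) * Real.exp (-Real.pi * v ^ 2 + 2 * K * |v|)) :=
        mul_le_mul (log_xx N hb1 v) (phase N t K h v) (norm_nonneg _) (by positivity)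
    _ = (Real.log (bb N) + 5) * (bb N / 2) ^ (-(1 / 2) : ℝ) * Real.exp (-Real.pi * v ^ 2 + (2 * K + 2) * |v|) := by
        have : -Real.pi * v ^ 2 + (2 * K + 2) * |v| = 2 * |v| + (-Real.pi * v ^ 2 + 2 * K * |v|) := by ring
        rw [this, Real.exp_add (2 * |v|)]; ring
    _ ≤ _ := by
        rw [mul_assoc _ (Real.exp _) (Real.exp _)]
        exact mul_le_mul_of_nonneg_left (gauss_dom _ _) (by positivity)
end RS

namespace RS
open Complex MeasureTheory Set Filter Topology

theorem GammaSeq_norm_le (s : ℂ) (hs : 0 < s.re) (n : ℕ) (hn : n ≠ 0) :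
    ‖GammaSeq s n‖ ≤ Real.Gamma s.re := by
  rw [GammaSeq_eq_approx_Gamma_integral hs hn, intervalIntegral.integral_of_le (by positivity)]
  have hInteg : IntegrableOn (fun x : ℝ => Real.exp (-x) * x ^ (s.re - 1)) (Ioi 0) :=
    Real.GammaIntegral_convergent hs
  have hn' : (0 : ℝ) < n := by positivity
  calc ‖∫ x in Ioc (0 : ℝ) n, ((((1 - x / n) ^ n : ℝ)) : ℂ) * (x : ℂ) ^ (s - 1)‖
      ≤ ∫ x in Ioc (0 : ℝ) n, Real.exp (-x) * x ^ (s.re - 1) := by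
        refine norm_integral_le_of_norm_le (hInteg.mono_set Ioc_subset_Ioi_self) ?_
        filter_upwards [ae_restrict_mem measurableSet_Ioc] with x hx
        rw [norm_mul, norm_cpow_eq_rpow_re_of_pos hx.1, norm_real, Real.norm_eq_abs]
        have h0 : 0 ≤ 1 - x / n := by
          rw [sub_nonneg, div_le_one hn']; exact hx.2
        rw [abs_of_nonneg (by positivity)]
        have := Real.one_sub_div_pow_le_exp_neg hx.2
        simp only [sub_re, one_re]
        exact mul_le_mul_of_nonneg_right this (Real.rpow_nonneg hx.1.le _)
    _ ≤ ∫ x in Ioi (0 : ℝ), Real.exp (-x) * x ^ (s.re - 1) := by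
        refine setIntegral_mono_set hInteg ?_ (Ioc_subset_Ioi_self.eventuallyLE)
        filter_upwards [ae_restrict_mem measurableSet_Ioi] with x hx
        have : 0 < x := hx
        simp only [Pi.zero_apply]
        positivity
    _ = Real.Gamma s.re := (Real.Gamma_eq_integral hs).symm

noncomputable def Fn (n : ℕ) (s : ℂ) : ℂ := Real.log n - ∑ j ∈ Finset.range (n + 1), 1 / (s + j)

theorem GammaSeq_hasDerivAt (s : ℂ) (hs : 0 < s.re) (n : ℕ) (hn : n ≠ 0) :
    HasDerivAt (fun z => GammaSeq z n) (GammaSeq s n * Fn n s) s := by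
  have hne : ∀ j : ℕ, s + j ≠ 0 := fun j h => by
    have := congrArg re h
    simp at this
    have : (0 : ℝ) ≤ j := by positivity
    linarith
  have hp : (∏ j ∈ Finset.range (n + 1), (s + j)) ≠ 0 := Finset.prod_ne_zero_iff.2 fun j _ => hne j
  have hn' : (n : ℂ) ≠ 0 := by exact_mod_cast hn
  have h1 : HasDerivAt (fun z : ℂ => (n : ℂ) ^ z) ((n : ℂ) ^ s * log n) s := by
    simpa using (hasDerivAt_id s).const_cpow (c := (n : ℂ)) (Or.inl hn')
  have h2 : HasDerivAt (fun z : ℂ => ∏ j ∈ Finset.range (n + 1), (z + j))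
      ((∏ j ∈ Finset.range (n + 1), (s + j)) * ∑ j ∈ Finset.range (n + 1), 1 / (s + j)) s := by
    have key : ∀ m : ℕ, HasDerivAt (fun z : ℂ => ∏ j ∈ Finset.range m, (z + j))
      ((∏ j ∈ Finset.range m, (s + j)) * ∑ j ∈ Finset.range m, 1 / (s + j)) s := by
      intro m
      induction m with
      | zero => simpa using hasDerivAt_const s (1 : ℂ)
      | succ m ih =>
        simp only [Finset.prod_range_succ, Finset.sum_range_succ]
        have := ih.fun_mul ((hasDerivAt_id s).add_const (m : ℂ))
        refine this.congr_deriv ?_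
        have := hne m
        simp only [id]
        field_simp
    exact key (n + 1)
  have h3 := (h1.mul_const ((n.factorial : ℂ))).div h2 hp
  refine h3.congr_deriv ?_
  unfold GammaSeq Fn
  rw [← natCast_log]
  field_simp

theorem digamma_tendsto (s : ℂ) (hs : 0 < s.re) :
    Tendsto (fun n => Fn n s) atTop (𝓝 (logDeriv Gamma s)) := by
  set r := s.re / 2 with hr
  have hr0 : 0 < r := by positivity
  have hball : ∀ z ∈ Metric.closedBall s r, r ≤ z.re ∧ z.re ≤ 3 * r := by
    intro z hz
    have h1 : |(z - s).re| ≤ r := (abs_re_le_norm _).trans (by simpa [dist_eq] using hz)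
    rw [abs_le, sub_re] at h1
    constructor <;> linarith [h1.1, h1.2]
  have hGd : ∀ z : ℂ, 0 < z.re → DifferentiableAt ℂ Gamma z := fun z hz => by
    refine differentiableAt_Gamma z fun m h => ?_
    rw [h] at hz; simp at hz
    have : (0 : ℝ) ≤ m := by positivity
    linarith
  obtain ⟨M, hM⟩ : ∃ M, ∀ x ∈ Icc r (3 * r), Real.Gamma x ≤ M := by
    have hc : ContinuousOn Real.Gamma (Icc r (3 * r)) := fun x hx => by
      refine (Real.differentiableAt_Gamma fun m h => ?_).continuousAt.continuousWithinAt
      have : (0 : ℝ) ≤ m := by positivity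
      linarith [hx.1]
    obtain ⟨M, hM⟩ := isCompact_Icc.bddAbove_image hc
    exact ⟨M, fun x hx => hM (mem_image_of_mem _ hx)⟩
  have hder : ∀ f : ℂ → ℂ, (∀ z : ℂ, 0 < z.re → DifferentiableAt ℂ f z) → 
      deriv f s = (2 * Real.pi * I : ℂ)⁻¹ • ∮ z in C(s, r), (1 / (z - s) ^ 2) • f z := by
    intro f hf
    have h := DifferentiableOn.deriv_eq_smul_circleIntegral (f := f) (c := s) hr0 (fun z hz => ?_)
    · rw [h, smul_smul, inv_mul_cancel₀ two_pi_I_ne_zero, one_smul]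
    exact (hf z (hr0.trans_le (hball z hz).1)).differentiableWithinAt
  have hT : Tendsto (fun n => deriv (fun z => GammaSeq z n) s) atTop (𝓝 (deriv Gamma s)) := by
    have e : ∀ᶠ n : ℕ in atTop, (2 * Real.pi * I : ℂ)⁻¹ • (∮ z in C(s, r), (1 / (z - s) ^ 2) • GammaSeq z n)
        = deriv (fun z => GammaSeq z n) s := by
      filter_upwards [eventually_ne_atTop 0] with n hn
      exact (hder (fun z => GammaSeq z n) fun z hz => (GammaSeq_hasDerivAt z hz n hn).differentiableAt).symm
    refine Tendsto.congr' e ?_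
    rw [hder Gamma hGd]
    refine Tendsto.const_smul ?_ _
    unfold circleIntegral
    have hmem : ∀ θ : ℝ, circleMap s r θ ∈ Metric.closedBall s r := fun θ =>
      circleMap_mem_closedBall s hr0.le θ
    refine intervalIntegral.tendsto_integral_filter_of_dominated_convergence (fun _ => r * (r⁻¹ ^ 2 * M)) ?_ ?_ ?_ ?_
    · filter_upwards [eventually_ne_atTop 0] with n hn
      refine Continuous.aestronglyMeasurable ?_
      have hc : Continuous fun θ => GammaSeq (circleMap s r θ) n := by
        rw [continuous_iff_continuousAt]
        intro θ
        exact ContinuousAt.comp (g := fun z => GammaSeq z n)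
          (GammaSeq_hasDerivAt _ (hr0.trans_le (hball _ (hmem θ)).1) n hn).continuousAt
          (continuous_circleMap s r).continuousAt
      have hc2 : Continuous fun θ => 1 / (circleMap s r θ - s) ^ 2 := by
        refine Continuous.div₀ continuous_const (((continuous_circleMap s r).sub continuous_const).pow 2) fun θ => pow_ne_zero 2 ?_
        simp [circleMap_sub_center, hr0.ne']
      simp only [deriv_circleMap]
      exact Continuous.smul ((continuous_circleMap 0 r).mul continuous_const) (hc2.smul hc)
    · filter_upwards [eventually_ne_atTop 0] with n hn
      refine Eventually.of_forall fun θ _ => ?_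
      have hz := hball _ (hmem θ)
      rw [norm_smul, norm_smul]
      have a1 : ‖deriv (circleMap s r) θ‖ = r := by simp [deriv_circleMap, abs_of_pos hr0]
      have a2 : ‖1 / (circleMap s r θ - s) ^ 2‖ = r⁻¹ ^ 2 := by
        rw [norm_div, norm_pow, circleMap_sub_center, norm_circleMap_zero, abs_of_pos hr0]
        simp
      rw [a1, a2]
      gcongr
      exact (GammaSeq_norm_le _ (hr0.trans_le hz.1) n hn).trans (hM _ ⟨hz.1, hz.2⟩)
    · simp
    · refine Eventually.of_forall fun θ _ => ?_
      exact Tendsto.const_smul (Tendsto.const_smul (GammaSeq_tendsto_Gamma _) _) _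
  have hG0 : Gamma s ≠ 0 := Gamma_ne_zero_of_re_pos hs
  have h5 := hT.div (GammaSeq_tendsto_Gamma s) hG0
  rw [logDeriv_apply]
  refine h5.congr' ?_
  filter_upwards [eventually_ne_atTop 0, (GammaSeq_tendsto_Gamma s).eventually_ne hG0] with n hn h0
  simp only [Pi.div_apply]
  rw [(GammaSeq_hasDerivAt s hs n hn).deriv]
  field_simp
end RS

namespace RS
open Complex MeasureTheory Set Filter Topology

theorem psi_term (τ : ℝ) (hτ : 2 ≤ τ) (j : ℕ) :
    |(Real.log ‖(1 / 4 + I * τ : ℂ) + (j + 1 : ℕ)‖ - Real.log ‖(1 / 4 + I * τ : ℂ) + j‖) - (1 / ((1 / 4 + I * τ : ℂ) + j)).re|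
      ≤ 2 * (1 / (τ + j - 1) - 1 / (τ + (j + 1 : ℕ) - 1)) := by
  set s : ℂ := 1 / 4 + I * τ + j with hs
  have hj : (0 : ℝ) ≤ j := by positivity
  have hsq : ‖s‖ ^ 2 = (1 / 4 + j) ^ 2 + τ ^ 2 := by
    rw [← normSq_eq_norm_sq, normSq_apply]
    simp [hs]; ring
  have hge : (τ + j) ^ 2 / 2 ≤ ‖s‖ ^ 2 := by
    rw [hsq]; nlinarith [sq_nonneg (τ - j)]
  have h2 : 2 ≤ ‖s‖ := by
    nlinarith [norm_nonneg s]
  have hs0 : s ≠ 0 := norm_pos_iff.1 (by linarith)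
  have hs1 : s + 1 ≠ 0 := by
    intro h
    have := congrArg re h
    simp [hs] at this
    linarith
  have e1 : Real.log ‖(1 / 4 + I * τ : ℂ) + (j + 1 : ℕ)‖ - Real.log ‖s‖ = (log (1 + 1 / s)).re := by
    rw [log_re, ← Real.log_div (norm_ne_zero_iff.2 ?_) (norm_ne_zero_iff.2 hs0), ← norm_div]
    · congr 2
      field_simp
      simp [hs]; ring
    · convert hs1 using 1
      simp [hs]; ring
  rw [e1, ← sub_re]
  refine (abs_re_le_norm _).trans ?_
  have hz : ‖1 / s‖ ≤ 1 / 2 := by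
    rw [norm_div, norm_one]; exact one_div_le_one_div_of_le (by norm_num) h2
  refine (norm_log_one_add_sub_self_le (by linarith)).trans ?_
  have h3 : (1 - ‖1 / s‖)⁻¹ ≤ 2 := by
    rw [inv_le_comm₀ (by linarith) (by norm_num)]; linarith
  calc ‖1 / s‖ ^ 2 * (1 - ‖1 / s‖)⁻¹ / 2 ≤ ‖1 / s‖ ^ 2 * 2 / 2 := by gcongr
    _ = 1 / ‖s‖ ^ 2 := by rw [norm_div, norm_one]; ring
    _ ≤ 1 / ((τ + j) ^ 2 / 2) := one_div_le_one_div_of_le (by positivity) hge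
    _ ≤ _ := by
      have a1 : 0 < τ + j - 1 := by linarith
      have a2 : 0 < τ + j := by linarith
      have : 1 / (τ + j - 1) - 1 / (τ + (j + 1 : ℕ) - 1) = 1 / ((τ + j - 1) * (τ + j)) := by
        push_cast
        rw [show τ + (j + 1) - 1 = τ + j by ring]
        field_simp; ring
      rw [this]
      rw [one_div_div, mul_one_div]
      gcongr
      nlinarith

theorem psi_bound (τ : ℝ) (hτ : 2 ≤ τ) :
    |(logDeriv Gamma (1 / 4 + I * τ)).re - Real.log τ| ≤ 5 / τ := by
  set s : ℂ := 1 / 4 + I * τ with hs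
  have hre : s.re = 1 / 4 := by simp [hs]
  have hsq : ‖s‖ ^ 2 = (1 / 4) ^ 2 + τ ^ 2 := by
    rw [← normSq_eq_norm_sq, normSq_apply]
    simp [hs]; ring
  have hF : ∀ n : ℕ, |(Fn n s).re - (Real.log ‖s‖ + (Real.log n - Real.log ‖s + (n + 1 : ℕ)‖))| ≤ 2 * (1 / (τ - 1)) := by
    intro n
    have e : (Fn n s).re - (Real.log ‖s‖ + (Real.log n - Real.log ‖s + (n + 1 : ℕ)‖)) =
        ∑ j ∈ Finset.range (n + 1), ((Real.log ‖s + (j + 1 : ℕ)‖ - Real.log ‖s + j‖) - (1 / (s + j)).re) := by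
      rw [Finset.sum_sub_distrib, Finset.sum_range_sub (fun j : ℕ => Real.log ‖s + j‖)]
      unfold Fn
      rw [sub_re, ofReal_re, re_sum]
      simp only [Nat.cast_zero, add_zero]
      ring
    rw [e]
    refine (Finset.abs_sum_le_sum_abs _ _).trans ?_
    refine (Finset.sum_le_sum fun j _ => psi_term τ hτ j).trans ?_
    rw [← Finset.mul_sum, Finset.sum_range_sub' (fun j : ℕ => 1 / (τ + j - 1))]
    have : 0 ≤ 1 / (τ + (n + 1 : ℕ) - 1) := by
      push_cast
      have : (0 : ℝ) ≤ n := by positivity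
      apply one_div_nonneg.2; linarith
    simp only [Nat.cast_zero, add_zero]
    linarith
  have hlim : Tendsto (fun n : ℕ => Real.log n - Real.log ‖s + (n + 1 : ℕ)‖) atTop (𝓝 0) := by
    have h1 : Tendsto (fun n : ℕ => (s + 1) / n + 1) atTop (𝓝 (0 + 1)) := by
      refine Tendsto.add ?_ tendsto_const_nhds
      exact tendsto_const_div_atTop_nhds_zero_nat (s + 1)
    have h2 : Tendsto (fun n : ℕ => - Real.log ‖(s + 1) / n + 1‖) atTop (𝓝 (- Real.log ‖(0 + 1 : ℂ)‖)) :=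
      ((Real.continuousAt_log (by simp)).tendsto.comp h1.norm).neg
    simp only [zero_add, norm_one, Real.log_one, neg_zero] at h2
    refine h2.congr' ?_
    filter_upwards [eventually_ne_atTop 0] with n hn
    have hn' : (n : ℂ) ≠ 0 := by exact_mod_cast hn
    have hne : s + (n + 1 : ℕ) ≠ 0 := by
      intro h
      have := congrArg re h
      simp [hre] at this
      have : (0 : ℝ) ≤ n := by positivity
      linarith
    have : (s + 1) / n + 1 = (s + (n + 1 : ℕ)) / n := by
      field_simp; push_cast; ring
    rw [this, norm_div, Real.log_div (norm_ne_zero_iff.2 hne) (norm_ne_zero_iff.2 hn'), norm_natCast]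
    ring
  have h1 := (continuous_re.tendsto _).comp (digamma_tendsto s (by rw [hre]; norm_num))
  have h2 := (h1.sub (hlim.const_add (Real.log ‖s‖))).abs
  have h3 := le_of_tendsto h2 (Eventually.of_forall hF)
  rw [add_zero] at h3
  have h4 : |Real.log ‖s‖ - Real.log τ| ≤ 1 / τ := by
    have hτ0 : 0 < τ := by linarith
    have hsτ : τ ≤ ‖s‖ := by
      refine (abs_le_of_sq_le_sq' ?_ (norm_nonneg s)).2
      rw [hsq]; linarith [sq_nonneg (1 / 4 : ℝ)]
    have hs0 : 0 < ‖s‖ := hτ0.trans_le hsτ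
    rw [abs_of_nonneg (sub_nonneg.2 (Real.log_le_log hτ0 hsτ)), ← Real.log_div hs0.ne' hτ0.ne']
    refine (Real.log_le_sub_one_of_pos (by positivity)).trans ?_
    rw [div_sub_one hτ0.ne']
    gcongr
    have : ‖s‖ ≤ τ + 1 := by
      apply abs_le_of_sq_le_sq' _ (by linarith) |>.2
      rw [hsq]; nlinarith
    linarith
  have h5 : 2 * (1 / (τ - 1)) ≤ 4 / τ := by
    rw [mul_one_div, div_le_div_iff₀ (by linarith) (by linarith)]; linarith
  calc _ = |((logDeriv Gamma s).re - Real.log ‖s‖) + (Real.log ‖s‖ - Real.log τ)| := by ring_nf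
    _ ≤ _ := abs_add_le _ _
    _ ≤ 4 / τ + 1 / τ := add_le_add (h3.trans h5) h4
    _ = 5 / τ := by ring
end RS

namespace RS
open Complex MeasureTheory Set Filter Topology

noncomputable def thd (t : ℝ) : ℝ :=
  -(1 / 2) * Real.log Real.pi + (1 / 2) * (logDeriv Gamma (1 / 4 + I * ((t / 2 : ℝ) : ℂ))).re

theorem hasDerivAt_GammaR (t : ℝ) : HasDerivAt (fun t : ℝ => Gammaℝ (1 / 2 + I * t))
    (Gammaℝ (1 / 2 + I * t) * (I * (-(1 / 2) * (Real.log Real.pi : ℝ) + (1 / 2) * logDeriv Gamma (1 / 4 + I * ((t / 2 : ℝ) : ℂ))))) t := by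
  have hp : (Real.pi : ℂ) ≠ 0 := by exact_mod_cast Real.pi_ne_zero
  set s : ℂ := 1 / 2 + I * t with hs
  have hsre : (s / 2).re = 1 / 4 := by
    rw [show s / 2 = 1 / 4 + I * ((t / 2 : ℝ) : ℂ) by simp [hs]; ring]; simp
  have hd : DifferentiableAt ℂ Gamma (s / 2) := by
    refine differentiableAt_Gamma _ fun m h => ?_
    rw [h] at hsre
    simp at hsre
    have : (0 : ℝ) ≤ m := by positivity
    linarith
  have hG : Gamma (s / 2) ≠ 0 := Gamma_ne_zero_of_re_pos (by rw [hsre]; norm_num)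
  have h1 : HasDerivAt (fun z : ℂ => (Real.pi : ℂ) ^ (-z / 2)) ((Real.pi : ℂ) ^ (-s / 2) * log Real.pi * (-1 / 2)) s :=
    ((hasDerivAt_id s).neg.div_const 2).const_cpow (Or.inl hp)
  have h2 : HasDerivAt (fun z : ℂ => Gamma (z / 2)) (deriv Gamma (s / 2) * (1 / 2)) s :=
    HasDerivAt.comp (h₂ := Gamma) (h := fun z : ℂ => z / 2) s hd.hasDerivAt ((hasDerivAt_id s).div_const 2)
  have h3 := h1.fun_mul h2
  have h4 : HasDerivAt Gammaℝ ((Real.pi : ℂ) ^ (-s / 2) * log Real.pi * (-1 / 2) * Gamma (s / 2) +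
      (Real.pi : ℂ) ^ (-s / 2) * (deriv Gamma (s / 2) * (1 / 2))) s := by
    exact h3.congr_of_eventuallyEq (Eventually.of_forall fun z => Gammaℝ_def z)
  have h5 : HasDerivAt (fun t : ℝ => (1 / 2 + I * t : ℂ)) I t := by
    simpa using ((hasDerivAt_id t).ofReal_comp.const_mul I).const_add (1 / 2 : ℂ)
  have h6 := HasDerivAt.comp (h₂ := Gammaℝ) (h := fun t : ℝ => (1 / 2 + I * t : ℂ)) t h4 h5
  refine h6.congr_deriv ?_
  rw [Gammaℝ_def, ofReal_log Real.pi_pos.le, logDeriv_apply,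
    show (1 / 4 + I * ((t / 2 : ℝ) : ℂ)) = s / 2 by simp [hs]; ring]
  field_simp

theorem hasDerivAt_W (t : ℝ) : HasDerivAt W (I * thd t * W t) t := by
  set w : ℝ → ℂ := fun t => Gammaℝ (1 / 2 + I * t) with hw
  set L : ℂ := -(1 / 2) * (Real.log Real.pi : ℝ) + (1 / 2) * logDeriv Gamma (1 / 4 + I * ((t / 2 : ℝ) : ℂ)) with hL
  have hLre : L.re = thd t := by
    unfold thd
    rw [hL, add_re, show (-(1 / 2) * (Real.log Real.pi : ℝ) : ℂ) = ((-(1 / 2) * Real.log Real.pi : ℝ) : ℂ) by push_cast; ring, ofReal_re,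
      show (1 / 2 : ℂ) = ((1 / 2 : ℝ) : ℂ) by push_cast; ring, re_ofReal_mul]
  have hw0 : ∀ t, w t ≠ 0 := fun t => GammaR_ne t
  have hd : HasDerivAt w (w t * (I * L)) t := hasDerivAt_GammaR t
  have hr : HasDerivAt (fun t => ‖w t‖) (-‖w t‖ * L.im) t := by
    have h1 := hd.norm_sq.sqrt (by have := hw0 t; positivity)
    simp only [Real.sqrt_sq (norm_nonneg _)] at h1
    refine h1.congr_deriv ?_
    have hn : ‖w t‖ ≠ 0 := norm_ne_zero_iff.2 (hw0 t)
    rw [Complex.inner]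
    have : (starRingEnd ℂ) (w t) * (w t * (I * L)) = ((‖w t‖ ^ 2 : ℝ) : ℂ) * (I * L) := by
      rw [← mul_assoc, ← normSq_eq_conj_mul_self, normSq_eq_norm_sq]
    first
      | rw [this]
      | rw [show w t * (I * L) * (starRingEnd ℂ) (w t) = ((‖w t‖ ^ 2 : ℝ) : ℂ) * (I * L) by rw [← this]; ring]
    rw [re_ofReal_mul]
    simp
    field_simp
  have hn : ((‖w t‖ : ℝ) : ℂ) ≠ 0 := by exact_mod_cast norm_ne_zero_iff.2 (hw0 t)
  have hW : ∀ t, W t = w t / ((‖w t‖ : ℝ) : ℂ) := fun t => by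
    have hn : ((‖w t‖ : ℝ) : ℂ) ≠ 0 := by exact_mod_cast norm_ne_zero_iff.2 (hw0 t)
    rw [eq_div_iff hn, mul_comm]; exact (GammaR_eq t).symm
  have h2 := hd.fun_div hr.ofReal_comp hn
  rw [show W = fun t => w t / ((‖w t‖ : ℝ) : ℂ) from funext hW]
  refine h2.congr_deriv ?_
  rw [← hLre]
  have : I * L = I * (L.re : ℂ) - L.im := by
    conv_lhs => rw [← re_add_im L]
    linear_combination (L.im : ℂ) * I_mul_I
  rw [this]
  push_cast
  field_simp
  ring

theorem thd_bound (t : ℝ) (ht : 4 ≤ t) :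
    |thd t - (1 / 2) * Real.log (t / (2 * Real.pi))| ≤ 5 / t := by
  have h := psi_bound (t / 2) (by linarith)
  have e : Real.log (t / (2 * Real.pi)) = Real.log (t / 2) - Real.log Real.pi := by
    rw [← Real.log_div (by positivity) Real.pi_ne_zero]
    congr 1; field_simp
  unfold thd
  rw [e]
  rw [show -(1 / 2) * Real.log Real.pi + 1 / 2 * (logDeriv Gamma (1 / 4 + I * ((t / 2 : ℝ) : ℂ))).re - 1 / 2 * (Real.log (t / 2) - Real.log Real.pi)
    = (1 / 2) * ((logDeriv Gamma (1 / 4 + I * ((t / 2 : ℝ) : ℂ))).re - Real.log (t / 2)) by ring, abs_mul, abs_of_pos (by norm_num : (0 : ℝ) < 1 / 2)]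
  have h0 : 0 < t := by linarith
  calc _ ≤ 1 / 2 * (5 / (t / 2)) := by gcongr
    _ = 5 / t := by field_simp
end RS

namespace RS
open Complex MeasureTheory Set Filter Topology

theorem term_im (t : ℝ) (k : ℕ) (hk : 1 ≤ k) :
    (W t * (k : ℂ) ^ (-(1 / 2 + I * t) : ℂ)).im =
      (1 / Real.sqrt k) * Real.sin (riemannSiegelTheta t - t * Real.log k) := by
  have hk0 : (0 : ℝ) < k := by exact_mod_cast hk
  have hkc : (k : ℂ) ≠ 0 := by exact_mod_cast hk0.ne'
  have e1 : (1 / Real.sqrt k) = Real.exp (-(1 / 2) * Real.log k) := by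
    rw [Real.sqrt_eq_rpow, Real.rpow_def_of_pos hk0, one_div, ← Real.exp_neg]; congr 1; ring
  have e2 : W t * (k : ℂ) ^ (-(1 / 2 + I * t) : ℂ) =
      ((Real.exp (-(1 / 2) * Real.log k) : ℝ) : ℂ) * cexp (((riemannSiegelTheta t - t * Real.log k : ℝ) : ℂ) * I) := by
    unfold W
    rw [cpow_def_of_ne_zero hkc, ← natCast_log, ofReal_exp, ← Complex.exp_add, ← Complex.exp_add]
    congr 1
    push_cast
    ring
  rw [e2, im_ofReal_mul, exp_ofReal_mul_I_im, e1]

theorem hardyZ_hasDeriv (N : ℕ) (t : ℝ) (ht : 0 < t) :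
    HasDerivAt hardyZ (-2 * (∑ k ∈ Finset.Ico 1 (N + 1), (1 / Real.sqrt k) * (thd t - Real.log k) *
        Real.sin (riemannSiegelTheta t - t * Real.log k)) -
      2 * (W t * (I * thd t * Jp N (1 / 2 + I * t) + I * Jl N (1 / 2 + I * t))).re) t := by
  have hin : HasDerivAt (fun t : ℝ => (1 / 2 + I * t : ℂ)) I t := by
    simpa using ((hasDerivAt_id t).ofReal_comp.const_mul I).const_add (1 / 2 : ℂ)
  have hJ : HasDerivAt (fun t : ℝ => Jp N (1 / 2 + I * t)) (Jl N (1 / 2 + I * t) * I) t :=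
    HasDerivAt.comp (h₂ := Jp N) (h := fun t : ℝ => (1 / 2 + I * t : ℂ)) t (hasDerivAt_Jp N _) hin
  have hk : ∀ k ∈ Finset.Ico 1 (N + 1), HasDerivAt (fun t : ℝ => (k : ℂ) ^ (-(1 / 2 + I * t) : ℂ))
      ((k : ℂ) ^ (-(1 / 2 + I * t) : ℂ) * log k * (-I)) t := by
    intro k hk
    have hk1 : 1 ≤ k := (Finset.mem_Ico.1 hk).1
    have hkc : (k : ℂ) ≠ 0 := by exact_mod_cast (by omega : k ≠ 0)
    have hc : HasDerivAt (fun z : ℂ => (k : ℂ) ^ (-z)) ((k : ℂ) ^ (-(1 / 2 + I * t)) * log k * (-1)) (1 / 2 + I * t) :=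
      (hasDerivAt_id (1 / 2 + I * t : ℂ)).fun_neg.const_cpow (Or.inl hkc)
    have := HasDerivAt.comp (h₂ := fun z : ℂ => (k : ℂ) ^ (-z)) (h := fun t : ℝ => (1 / 2 + I * t : ℂ)) t hc hin
    refine this.congr_deriv ?_
    ring
  have h1 := (hasDerivAt_W t).fun_mul ((HasDerivAt.fun_sum hk).fun_sub hJ)
  have h2 : HasDerivAt (fun t : ℝ => (W t * ((∑ k ∈ Finset.Ico 1 (N+1), (k:ℂ)^(-(1/2 + I*t) : ℂ)) - Jp N (1/2 + I*t))).re) _ t :=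
    (reCLM.hasFDerivAt.comp_hasDerivAt t h1)
  have h3 := (h2.const_mul 2).congr_of_eventuallyEq (f₁ := hardyZ) (by
    filter_upwards [lt_mem_nhds ht] with u hu
    exact hardyZ_N N u hu)
  refine h3.congr_deriv ?_
  rw [reCLM_apply]
  have e : I * thd t * W t * ((∑ k ∈ Finset.Ico 1 (N+1), (k:ℂ)^(-(1/2 + I*t) : ℂ)) - Jp N (1/2 + I*t)) +
      W t * (∑ k ∈ Finset.Ico 1 (N+1), (k:ℂ)^(-(1/2 + I*t) : ℂ) * log k * (-I) - Jl N (1 / 2 + I * t) * I) =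
      (∑ k ∈ Finset.Ico 1 (N+1), ((thd t - Real.log k : ℝ) : ℂ) * (I * (W t * (k:ℂ)^(-(1/2 + I*t) : ℂ)))) -
      W t * (I * thd t * Jp N (1 / 2 + I * t) + I * Jl N (1 / 2 + I * t)) := by
    have : (∑ k ∈ Finset.Ico 1 (N+1), ((thd t - Real.log k : ℝ) : ℂ) * (I * (W t * (k:ℂ)^(-(1/2 + I*t) : ℂ)))) =
        I * thd t * W t * (∑ k ∈ Finset.Ico 1 (N+1), (k:ℂ)^(-(1/2 + I*t) : ℂ)) +
        W t * (∑ k ∈ Finset.Ico 1 (N+1), (k:ℂ)^(-(1/2 + I*t) : ℂ) * log k * (-I)) := by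
      rw [Finset.mul_sum, Finset.mul_sum, ← Finset.sum_add_distrib]
      refine Finset.sum_congr rfl fun k _ => ?_
      rw [← natCast_log]; push_cast; ring
    rw [this]; ring
  rw [e, sub_re, re_sum]
  have e2 : ∑ k ∈ Finset.Ico 1 (N+1), (((thd t - Real.log k : ℝ) : ℂ) * (I * (W t * (k:ℂ)^(-(1/2 + I*t) : ℂ)))).re =
      - ∑ k ∈ Finset.Ico 1 (N + 1), (1 / Real.sqrt k) * (thd t - Real.log k) *
        Real.sin (riemannSiegelTheta t - t * Real.log k) := by
    rw [← Finset.sum_neg_distrib]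
    refine Finset.sum_congr rfl fun k hk => ?_
    rw [re_ofReal_mul, I_mul_re, term_im t k (Finset.mem_Ico.1 hk).1]
    ring
  rw [e2]
  ring

theorem sum_inv_sqrt (N : ℕ) : ∑ k ∈ Finset.Ico 1 (N + 1), 1 / Real.sqrt k ≤ 2 * Real.sqrt N := by
  induction N with
  | zero => simp
  | succ N ih =>
    rw [Finset.sum_Ico_succ_top (by omega)]
    have h : 1 / Real.sqrt ((N + 1 : ℕ) : ℝ) ≤ 2 * (Real.sqrt ((N + 1 : ℕ) : ℝ) - Real.sqrt N) := by
      have hp : 0 < Real.sqrt ((N + 1 : ℕ) : ℝ) := Real.sqrt_pos.2 (by positivity)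
      have h1 := Real.sq_sqrt (show (0 : ℝ) ≤ ((N + 1 : ℕ) : ℝ) by positivity)
      have h2 := Real.sq_sqrt (show (0 : ℝ) ≤ (N : ℝ) by positivity)
      rw [div_le_iff₀ hp]
      have : ((N + 1 : ℕ) : ℝ) = N + 1 := by push_cast; ring
      rw [this] at h1 hp ⊢
      nlinarith [sq_nonneg (Real.sqrt ((N : ℝ) + 1) - Real.sqrt N)]
    linarith

set_option maxHeartbeats 2000000 in
theorem main_bound (T : ℝ) (hT : Real.exp 10 ≤ T) (t : ℝ) (h1 : T ≤ t) (h2 : t ≤ T + T ^ ((1 : ℝ) / 4)) :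
    |deriv hardyZ t +
            2 * ∑ n ∈ Finset.Ico 1 ⌈Real.sqrt (T / (2 * Real.pi))⌉₊,
              (1 / Real.sqrt n) * Real.log (Real.sqrt (T / (2 * Real.pi)) / n) *
                Real.sin (riemannSiegelTheta t - t * Real.log n)|
            ≤ (24 + 64 * Real.exp ((2 * 12) ^ 2) + 64 * Real.exp ((2 * 12 + 2) ^ 2)) * T ^ (-(1 : ℝ) / 4) * Real.log T := by
  have hT0 : 0 < T := (Real.exp_pos _).trans_le hT
  have hlog : 10 ≤ Real.log T := by rwa [Real.le_log_iff_exp_le hT0]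
  set q := T ^ ((1 : ℝ) / 4) with hq
  have hq0 : 0 < q := Real.rpow_pos_of_pos hT0 _
  have hTq : T = q ^ 4 := by
    rw [hq, ← Real.rpow_natCast, ← Real.rpow_mul hT0.le]; norm_num
  have hqi : T ^ (-(1 : ℝ) / 4) = q⁻¹ := by
    rw [hq, ← Real.rpow_neg hT0.le]; congr 1; ring
  have hT2 : 1024 ≤ T := by
    refine le_trans ?_ hT
    have : Real.exp 10 = Real.exp 1 ^ 10 := by rw [← Real.exp_nat_mul]; norm_num
    rw [this]
    have h := Real.exp_one_gt_d9
    calc (1024 : ℝ) = 2 ^ 10 := by norm_num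
      _ ≤ _ := by gcongr; linarith
  have hq4 : 4 ≤ q := by
    by_contra! h
    have : q ^ 4 ≤ 4 ^ 4 := by gcongr
    rw [← hTq] at this
    linarith
  set P := Real.sqrt (T / (2 * Real.pi)) with hP
  have hpi := Real.pi_gt_three
  have hpi4 := Real.pi_lt_d2
  have hP2 : P ^ 2 * (2 * Real.pi) = T := by
    rw [hP, Real.sq_sqrt (by positivity)]; field_simp
  have hPpos : 0 < P := Real.sqrt_pos.2 (by positivity)
  have hPle : P ≤ q ^ 2 := by
    refine (abs_le_of_sq_le_sq' ?_ (by positivity)).2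
    nlinarith [sq_nonneg P]
  have hPge : q ^ 2 / 3 ≤ P := by
    refine (abs_le_of_sq_le_sq' ?_ hPpos.le).2
    have : P ^ 2 * 9 ≥ q ^ 4 := by nlinarith [sq_nonneg P]
    nlinarith
  obtain ⟨N, hN⟩ : ∃ N : ℕ, ⌈P⌉₊ = N + 1 := ⟨⌈P⌉₊ - 1, by have := Nat.ceil_pos.2 hPpos; omega⟩
  have hN1 : P ≤ N + 1 := by have := Nat.le_ceil P; rw [hN] at this; exact_mod_cast this
  have hN2 : (N : ℝ) < P := by have := Nat.ceil_lt_add_one hPpos.le; rw [hN] at this; push_cast at this; linarith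
  have hb : bb N = N + 1 / 2 := rfl
  have hbq : q ^ 2 / 8 ≤ bb N := by rw [hb]; nlinarith
  have hbq' : q ≤ bb N := by rw [hb]; nlinarith
  have hK : |t - 2 * Real.pi * bb N ^ 2| ≤ 12 * bb N := by
    have a : t - 2 * Real.pi * bb N ^ 2 = (t - T) + 2 * Real.pi * ((P - bb N) * (P + bb N)) := by
      rw [← hP2]; ring
    have b1 : |P - bb N| ≤ 1 / 2 := by rw [abs_le, hb]; constructor <;> linarith
    have hb0 : 0 < bb N := by linarith
    rw [a]
    refine (abs_add_le _ _).trans ?_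
    rw [abs_mul, abs_mul (P - bb N), abs_of_nonneg (by linarith : 0 ≤ t - T), abs_of_pos (by positivity : 0 < 2 * Real.pi),
      abs_of_pos (by positivity : 0 < P + bb N)]
    have b2 : P + bb N ≤ 2 * bb N + 1 / 2 := by rw [hb]; linarith
    have b3 : |P - bb N| * (P + bb N) ≤ 1 / 2 * (2 * bb N + 1 / 2) := by gcongr
    have b4 : 2 * Real.pi * (|P - bb N| * (P + bb N)) ≤ 2 * 3.15 * (1 / 2 * (2 * bb N + 1 / 2)) := by gcongr
    linarith
  have hJp := Jp_bound N t 12 hK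
  have hJl := Jl_bound N (by linarith) t 12 hK
  have hpow : (bb N / 2) ^ (-(1 / 2) : ℝ) ≤ 4 * q⁻¹ := by
    calc (bb N / 2) ^ (-(1 / 2) : ℝ) ≤ ((q / 4) ^ 2) ^ (-(1 / 2) : ℝ) := by
          refine Real.rpow_le_rpow_of_nonpos (by positivity) ?_ (by norm_num)
          nlinarith
      _ = 4 * q⁻¹ := by
          rw [← Real.rpow_natCast, ← Real.rpow_mul (by positivity)]
          norm_num
          rw [Real.rpow_neg_one]
          field_simp
  have hE1 := Real.exp_pos ((2 * 12) ^ 2)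
  have hE2 := Real.exp_pos ((2 * 12 + 2) ^ 2)
  generalize Real.exp ((2 * 12) ^ 2) = E1 at hJp hE1 ⊢
  generalize Real.exp ((2 * 12 + 2) ^ 2) = E2 at hJl hE2 ⊢
  have ht0 : 0 < t := by linarith
  have hqi0 : 0 < q⁻¹ := inv_pos.2 hq0
  have hlogP : Real.log P = (1 / 2) * Real.log (T / (2 * Real.pi)) := by
    rw [hP, Real.log_sqrt (by positivity)]; ring
  have hthd : |thd t - Real.log P| ≤ 6 * (q⁻¹) ^ 3 := by
    have a1 := thd_bound t (by linarith)
    have a2 : (1 / 2) * Real.log (t / (2 * Real.pi)) - Real.log P = (1 / 2) * Real.log (t / T) := by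
      rw [hlogP, Real.log_div ht0.ne' (by positivity), Real.log_div hT0.ne' (by positivity), Real.log_div ht0.ne' hT0.ne']
      ring
    have a3 : 0 ≤ Real.log (t / T) := Real.log_nonneg ((one_le_div hT0).2 h1)
    have a4 : Real.log (t / T) ≤ (q⁻¹) ^ 3 := by
      refine (Real.log_le_sub_one_of_pos (by positivity)).trans ?_
      rw [div_sub_one hT0.ne', div_le_iff₀ hT0]
      calc t - T ≤ q := by linarith
        _ = q⁻¹ ^ 3 * T := by rw [hTq]; field_simp
    have a5 : 5 / t ≤ 5 * (q⁻¹) ^ 3 := by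
      rw [div_le_iff₀ ht0]
      have : q⁻¹ ^ 3 * T = q := by rw [hTq]; field_simp
      have : q⁻¹ ^ 3 * T ≤ q⁻¹ ^ 3 * t := by gcongr
      nlinarith
    have a6 : |(1 / 2) * Real.log (t / (2 * Real.pi)) - Real.log P| ≤ (q⁻¹) ^ 3 := by
      rw [a2, abs_of_nonneg (by positivity)]; linarith
    calc _ = |(thd t - (1 / 2) * Real.log (t / (2 * Real.pi))) + ((1 / 2) * Real.log (t / (2 * Real.pi)) - Real.log P)| := by ring_nf
      _ ≤ _ := abs_add_le _ _
      _ ≤ _ := by linarith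
  have hqle : q⁻¹ ≤ 1 := inv_le_one_of_one_le₀ (by linarith)
  have hq2 : 16 ≤ q ^ 2 := by nlinarith only [hq4]
  have hTq2 : q ^ 2 + 1 ≤ T := by
    rw [hTq]; nlinarith only [hq2]
  have hPT : P ≤ T := by linarith
  have hP1 : 1 ≤ P := by linarith
  have hthd2 : |thd t| ≤ 2 * Real.log T := by
    have b1 : q⁻¹ ^ 3 ≤ 1 := pow_le_one₀ hqi0.le hqle
    have b2 : 0 ≤ Real.log P := Real.log_nonneg hP1
    have b3 : Real.log P ≤ Real.log T := Real.log_le_log hPpos hPT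
    rw [abs_le] at hthd ⊢
    constructor <;> linarith [hthd.1, hthd.2]
  have hlogb : Real.log (bb N) + 5 ≤ 2 * Real.log T := by
    have : Real.log (bb N) ≤ Real.log T := by
      refine Real.log_le_log (by linarith) ?_
      rw [hb]; linarith
    linarith
  have hlogb0 : 0 ≤ Real.log (bb N) := Real.log_nonneg (by linarith)
  have hJp' : ‖Jp N (1 / 2 + I * t)‖ ≤ 16 * q⁻¹ * E1 := by
    refine hJp.trans ?_
    have := mul_le_mul_of_nonneg_right hpow hE1.le
    linarith
  have hJl' : ‖Jl N (1 / 2 + I * t)‖ ≤ 32 * q⁻¹ * Real.log T * E2 := by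
    refine hJl.trans ?_
    have : (Real.log (bb N) + 5) * (bb N / 2) ^ (-(1 / 2) : ℝ) ≤ (2 * Real.log T) * (4 * q⁻¹) := by
      refine mul_le_mul hlogb hpow (Real.rpow_nonneg ?_ _) ?_ <;> linarith
    have := mul_le_mul_of_nonneg_right this hE2.le
    linarith
  have hsum : ∑ k ∈ Finset.Ico 1 (N + 1), 1 / Real.sqrt k ≤ 2 * q := by
    refine (sum_inv_sqrt N).trans ?_
    have : Real.sqrt N ≤ q := by
      rw [Real.sqrt_le_left hq0.le]; linarith
    linarith
  rw [hN, (hardyZ_hasDeriv N t ht0).deriv, hqi]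
  have e : -2 * (∑ k ∈ Finset.Ico 1 (N + 1), (1 / Real.sqrt k) * (thd t - Real.log k) *
        Real.sin (riemannSiegelTheta t - t * Real.log k)) -
      2 * (W t * (I * thd t * Jp N (1 / 2 + I * t) + I * Jl N (1 / 2 + I * t))).re +
      2 * ∑ n ∈ Finset.Ico 1 (N + 1),
              (1 / Real.sqrt n) * Real.log (P / n) *
                Real.sin (riemannSiegelTheta t - t * Real.log n) =
      2 * (∑ k ∈ Finset.Ico 1 (N + 1), (1 / Real.sqrt k) * ((Real.log P - thd t) *
        Real.sin (riemannSiegelTheta t - t * Real.log k))) -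
      2 * (W t * (I * thd t * Jp N (1 / 2 + I * t) + I * Jl N (1 / 2 + I * t))).re := by
    have : ∑ k ∈ Finset.Ico 1 (N + 1), (1 / Real.sqrt k) * ((Real.log P - thd t) *
        Real.sin (riemannSiegelTheta t - t * Real.log k)) =
        (∑ n ∈ Finset.Ico 1 (N + 1),
              (1 / Real.sqrt n) * Real.log (P / n) *
                Real.sin (riemannSiegelTheta t - t * Real.log n)) -
        (∑ k ∈ Finset.Ico 1 (N + 1), (1 / Real.sqrt k) * (thd t - Real.log k) *
        Real.sin (riemannSiegelTheta t - t * Real.log k)) := by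
      rw [← Finset.sum_sub_distrib]
      refine Finset.sum_congr rfl fun k hk => ?_
      have hk1 : 1 ≤ k := (Finset.mem_Ico.1 hk).1
      have hk0 : (k : ℝ) ≠ 0 := by exact_mod_cast (by omega : k ≠ 0)
      rw [Real.log_div hPpos.ne' hk0]
      ring
    rw [this]; ring
  rw [e]
  have c1 : |∑ k ∈ Finset.Ico 1 (N + 1), (1 / Real.sqrt k) * ((Real.log P - thd t) *
        Real.sin (riemannSiegelTheta t - t * Real.log k))| ≤ 12 * q⁻¹ ^ 2 := by
    calc _ ≤ ∑ k ∈ Finset.Ico 1 (N + 1), |(1 / Real.sqrt k) * ((Real.log P - thd t) *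
        Real.sin (riemannSiegelTheta t - t * Real.log k))| := Finset.abs_sum_le_sum_abs _ _
      _ ≤ ∑ k ∈ Finset.Ico 1 (N + 1), (1 / Real.sqrt k) * (6 * q⁻¹ ^ 3) := by
        refine Finset.sum_le_sum fun k _ => ?_
        rw [abs_mul, abs_mul, abs_of_nonneg (by positivity : (0 : ℝ) ≤ 1 / Real.sqrt k)]
        refine mul_le_mul_of_nonneg_left ?_ (by positivity)
        calc |Real.log P - thd t| * |Real.sin (riemannSiegelTheta t - t * Real.log k)|
            ≤ |Real.log P - thd t| * 1 := by gcongr; exact Real.abs_sin_le_one _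
          _ ≤ _ := by rw [mul_one, abs_sub_comm]; exact hthd
      _ = (∑ k ∈ Finset.Ico 1 (N + 1), (1 / Real.sqrt k)) * (6 * q⁻¹ ^ 3) := by rw [Finset.sum_mul]
      _ ≤ 2 * q * (6 * q⁻¹ ^ 3) := by gcongr
      _ = 12 * q⁻¹ ^ 2 := by field_simp; norm_num
  have c2 : |(W t * (I * thd t * Jp N (1 / 2 + I * t) + I * Jl N (1 / 2 + I * t))).re| ≤
      32 * q⁻¹ * E1 * Real.log T + 32 * q⁻¹ * Real.log T * E2 := by
    refine (abs_re_le_norm _).trans ?_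
    rw [norm_mul, W_norm, one_mul]
    refine (norm_add_le _ _).trans ?_
    rw [norm_mul, norm_mul, norm_mul, norm_I, one_mul, one_mul, norm_real, Real.norm_eq_abs]
    have : |thd t| * ‖Jp N (1 / 2 + I * t)‖ ≤ (2 * Real.log T) * (16 * q⁻¹ * E1) := by
      gcongr
    linarith
  refine (abs_sub _ _).trans ?_
  rw [abs_mul, abs_mul, abs_of_pos (by norm_num : (0 : ℝ) < 2)]
  have c3 : q⁻¹ ^ 2 ≤ q⁻¹ * Real.log T := by
    rw [pow_two]; gcongr; linarith
  linarith
end RS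

/-- There are `C, T₀ > 0` such that for all `T ≥ T₀`, all `H ∈ (0, T^{1/4}]`,
and all `t ∈ [T, T+H]`, with `P₀ = √(T/(2π))`,
`|Z'(t) + 2 Σ_{n < P₀} n^{-1/2} ln(P₀/n) sin(ϑ(t) - t ln n)| ≤ C T^{-1/4} ln T`. -/
theorem hardyZ_deriv_formula_two :
    ∃ C : ℝ, 0 < C ∧ ∃ T₀ : ℝ, 0 < T₀ ∧
      ∀ T : ℝ, T₀ ≤ T → ∀ H ∈ Set.Ioc (0 : ℝ) (T ^ ((1 : ℝ) / 4)),
        ∀ t ∈ Set.Icc T (T + H),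
          |deriv hardyZ t +
            2 * ∑ n ∈ Finset.Ico 1 ⌈Real.sqrt (T / (2 * Real.pi))⌉₊,
              (1 / Real.sqrt n) * Real.log (Real.sqrt (T / (2 * Real.pi)) / n) *
                Real.sin (riemannSiegelTheta t - t * Real.log n)|
            ≤ C * T ^ (-(1 : ℝ) / 4) * Real.log T := by
  refine ⟨24 + 64 * Real.exp ((2 * 12) ^ 2) + 64 * Real.exp ((2 * 12 + 2) ^ 2), by positivity,
    Real.exp 10, Real.exp_pos _, fun T hT H hH t ht => ?_⟩
  exact RS.main_bound T hT t ht.1 (ht.2.trans (add_le_add_right hH.2 T))
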